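/- Fix an integer d ≥ 3 and a real p with 1/(d-1) < p < 1, and let q ∈ [0,1) satisfy q = (1-p+pq)^{d-1}. For 1 ≤ k ≤ d define α_k = C(d,k) p^k (1−p)^{d−k} (1 − q^k). Then for every ε > 0 and b > 0 there exist c, R > 0 such that: if 𝒢 is a regular (b,d)-expander on n vertices with girth at least R, then with probability at least 1 − exp(−c n), the random graph G ∼ 𝒢_p satisfies | D_k/n − α_k | < ε for every 1 ≤ k ≤ d, where D_k is the number of vertices of degree exactly k in a largest connected component C₁(G) of G (degrees taken in G). -/

import Mathlib

open scoped Classical symmDiff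

noncomputable section

namespace Percolation

variable {V : Type} [Fintype V] [DecidableEq V]

/-- The edge set of `G` as a finset. -/
noncomputable def edgeFinset' (G : SimpleGraph V) : Finset (Sym2 V) :=
  Finset.univ.filter (· ∈ G.edgeSet)

/-- Probability that bond percolation on `G` with parameter `p` produces a spanning
subgraph satisfying `P`. -/
noncomputable def percProb (G : SimpleGraph V) (p : ℝ) (P : SimpleGraph V → Prop) : ℝ :=
  ∑ s ∈ (edgeFinset' G).powerset,
    (p ^ s.card * (1 - p) ^ ((edgeFinset' G).card - s.card)) *
      (if P (SimpleGraph.fromEdgeSet (↑s)) then 1 else 0)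

/-- Joint probability for two independent bond percolations on `G`. -/
noncomputable def percProb2 (G : SimpleGraph V) (p₁ p₂ : ℝ)
    (P : SimpleGraph V → SimpleGraph V → Prop) : ℝ :=
  ∑ s ∈ (edgeFinset' G).powerset, ∑ t ∈ (edgeFinset' G).powerset,
    (p₁ ^ s.card * (1 - p₁) ^ ((edgeFinset' G).card - s.card)) *
    (p₂ ^ t.card * (1 - p₂) ^ ((edgeFinset' G).card - t.card)) *
      (if P (SimpleGraph.fromEdgeSet (↑s)) (SimpleGraph.fromEdgeSet (↑t)) then 1 else 0)

/-- Number of edges of `G` joining `S` to its complement. -/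
noncomputable def cutCard (G : SimpleGraph V) (S : Finset V) : ℕ :=
  ((edgeFinset' G).filter (fun e => ∃ x ∈ S, ∃ y, y ∉ S ∧ e = s(x, y))).card

/-- `G` is a `(b,d)`-expander: max degree at most `d`, and every vertex set of size at most
`n/2` has at least `b|S|` edges to its complement. -/
def IsExpander (G : SimpleGraph V) (b : ℝ) (d : ℕ) : Prop :=
  (∀ v, (G.neighborSet v).ncard ≤ d) ∧
  ∀ S : Finset V, (S.card : ℝ) ≤ Fintype.card V / 2 → b * S.card ≤ cutCard G S

/-- `G` is a regular `(b,d)`-expander. -/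
def IsRegularExpander (G : SimpleGraph V) (b : ℝ) (d : ℕ) : Prop :=
  IsExpander G b d ∧ ∀ v, (G.neighborSet v).ncard = d

/-- The vertices of the connected component `c` of `G`. -/
noncomputable def compVerts (G : SimpleGraph V) (c : G.ConnectedComponent) : Finset V :=
  Finset.univ.filter (fun v => G.connectedComponentMk v = c)

/-- The edges of the connected component `c` of `G`. -/
noncomputable def compEdges (G : SimpleGraph V) (c : G.ConnectedComponent) : Finset (Sym2 V) :=
  (edgeFinset' G).filter (fun e => ∀ v ∈ e, G.connectedComponentMk v = c)

/-- `c` is a largest connected component of `G`. -/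
def IsLargestComp (G : SimpleGraph V) (c : G.ConnectedComponent) : Prop :=
  ∀ c' : G.ConnectedComponent, (compVerts G c').card ≤ (compVerts G c).card

/-- The 2-core of the connected component `c` of `G` : the maximal subgraph of `G`
supported inside `c` all of whose vertices have degree at least 2. -/
noncomputable def twoCoreComp (G : SimpleGraph V) (c : G.ConnectedComponent) : SimpleGraph V :=
  sSup {H : SimpleGraph V | H ≤ G ∧ (∀ v ∈ H.support, G.connectedComponentMk v = c) ∧
    ∀ v ∈ H.support, 2 ≤ (H.neighborSet v).ncard}

/-- The event `A^R_{x,y}(H)`: the connected component of `y` in `H` with the edge `xy`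
removed (if present) has at least `R` vertices. -/
def eventA (H : SimpleGraph V) (R : ℕ) (x y : V) : Prop :=
  R ≤ (compVerts (H.deleteEdges {s(x, y)})
        ((H.deleteEdges {s(x, y)}).connectedComponentMk y)).card

/-- `E₁(H)`: edges `xy` of `H` such that `A^R_{x,y}` or `A^R_{y,x}` holds. -/
noncomputable def E1set (H : SimpleGraph V) (R : ℕ) : Finset (Sym2 V) :=
  (edgeFinset' H).filter (fun e => ∃ x y, e = s(x, y) ∧ (eventA H R x y ∨ eventA H R y x))

/-- `V₁(H)`: vertices `x` such that for some `y`, `xy ∈ E(H)` and `A^R_{x,y}` holds. -/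
noncomputable def V1set (H : SimpleGraph V) (R : ℕ) : Finset V :=
  Finset.univ.filter (fun x => ∃ y, H.Adj x y ∧ eventA H R x y)

/-- `E₂(H)`: edges `xy` of `H` such that both `A^R_{x,y}` and `A^R_{y,x}` hold. -/
noncomputable def E2set (H : SimpleGraph V) (R : ℕ) : Finset (Sym2 V) :=
  (edgeFinset' H).filter (fun e => ∃ x y, e = s(x, y) ∧ eventA H R x y ∧ eventA H R y x)

/-- `V₂(H)`: vertices incident to an edge of `E₂(H)`. -/
noncomputable def V2set (H : SimpleGraph V) (R : ℕ) : Finset V :=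
  Finset.univ.filter (fun x => ∃ e ∈ E2set H R, x ∈ e)

/-- `V̄₁(H)`: vertices `y` such that `A^R_{x,y}(H)` holds for some `x`. -/
noncomputable def Vbar1 (H : SimpleGraph V) (R : ℕ) : Finset V :=
  Finset.univ.filter (fun y => ∃ x, eventA H R x y)

/-- `S` is `k`-thick in `H`: a union of pairwise disjoint subsets, each of size at least
`k`, each inducing a connected subgraph of `H`. -/
def IsThick (H : SimpleGraph V) (k : ℕ) (S : Finset V) : Prop :=
  ∃ P : Finset (Finset V),
    (∀ T ∈ P, k ≤ T.card ∧ (H.induce (↑T : Set V)).Connected) ∧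
    (↑P : Set (Finset V)).PairwiseDisjoint id ∧ S = P.biUnion id

/-- `S` is a separator of `K`. -/
def IsSeparator {W : Type} [Fintype W] (K : SimpleGraph W) (S : Finset W) : Prop :=
  ∃ A B : Finset W, Disjoint A B ∧ Disjoint A S ∧ Disjoint B S ∧
    (∀ w, w ∈ A ∨ w ∈ B ∨ w ∈ S) ∧
    (∀ a ∈ A, ∀ b ∈ B, ¬ K.Adj a b) ∧
    3 * A.card ≤ 2 * Fintype.card W ∧ 3 * B.card ≤ 2 * Fintype.card W

set_option linter.unusedSectionVars false

section RandomSubset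

variable {α : Type*}

/-- Expectation of `f` over the random subset of `E` keeping each element independently with
probability `p`. -/
def bexp (p : ℝ) (E : Finset α) (f : Finset α → ℝ) : ℝ :=
  ∑ s ∈ E.powerset, p ^ s.card * (1 - p) ^ (E.card - s.card) * f s

lemma bexp_empty (p : ℝ) (f : Finset α → ℝ) : bexp p ∅ f = f ∅ := by
  simp [bexp]

lemma bexp_congr (p : ℝ) {E : Finset α} {f g : Finset α → ℝ} (h : ∀ s ⊆ E, f s = g s) :
    bexp p E f = bexp p E g :=
  Finset.sum_congr rfl fun s hs => by rw [h s (Finset.mem_powerset.1 hs)]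

lemma bexp_mono {p : ℝ} (hp : 0 ≤ p) (hp1 : p ≤ 1) {E : Finset α} {f g : Finset α → ℝ}
    (h : ∀ s ⊆ E, f s ≤ g s) : bexp p E f ≤ bexp p E g :=
  Finset.sum_le_sum fun s hs => mul_le_mul_of_nonneg_left (h s (Finset.mem_powerset.1 hs))
    (mul_nonneg (pow_nonneg hp _) (pow_nonneg (sub_nonneg.2 hp1) _))

lemma bexp_add (p : ℝ) (E : Finset α) (f g : Finset α → ℝ) :
    bexp p E (fun s => f s + g s) = bexp p E f + bexp p E g := by
  simp [bexp, mul_add, Finset.sum_add_distrib]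

lemma bexp_const_mul (p : ℝ) (E : Finset α) (a : ℝ) (f : Finset α → ℝ) :
    bexp p E (fun s => a * f s) = a * bexp p E f := by
  simp only [bexp, Finset.mul_sum]
  exact Finset.sum_congr rfl fun s _ => by ring

lemma bexp_sub (p : ℝ) (E : Finset α) (f g : Finset α → ℝ) :
    bexp p E (fun s => f s - g s) = bexp p E f - bexp p E g := by
  simp [bexp, mul_sub, Finset.sum_sub_distrib]

lemma bexp_sum {ι : Type*} (p : ℝ) (E : Finset α) (I : Finset ι) (f : ι → Finset α → ℝ) :
    bexp p E (fun s => ∑ i ∈ I, f i s) = ∑ i ∈ I, bexp p E (f i) := by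
  simp only [bexp, Finset.mul_sum]
  exact Finset.sum_comm

lemma bexp_card (p : ℝ) (E : Finset α) (g : ℕ → ℝ) :
    bexp p E (fun s => g s.card) =
      ∑ j ∈ Finset.range (E.card + 1),
        (E.card.choose j : ℝ) * (p ^ j * (1 - p) ^ (E.card - j) * g j) := by
  unfold bexp
  rw [Finset.sum_powerset_apply_card (fun j => p ^ j * (1 - p) ^ (E.card - j) * g j)]
  simp

variable [DecidableEq α]

lemma bexp_insert (p : ℝ) {E : Finset α} {e : α} (he : e ∉ E) (f : Finset α → ℝ) :
    bexp p (insert e E) f = p * bexp p E (fun s => f (insert e s)) + (1 - p) * bexp p E f := by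
  unfold bexp
  rw [Finset.sum_powerset_insert he, add_comm, Finset.mul_sum, Finset.mul_sum]
  congr 1
  · refine Finset.sum_congr rfl fun s hs => ?_
    have hs' := Finset.mem_powerset.1 hs
    rw [Finset.card_insert_of_notMem he, Finset.card_insert_of_notMem (fun h => he (hs' h)),
      Nat.add_sub_add_right]
    ring
  · refine Finset.sum_congr rfl fun s hs => ?_
    have hs' := Finset.card_le_card (Finset.mem_powerset.1 hs)
    rw [Finset.card_insert_of_notMem he, Nat.sub_add_comm hs']
    ring

lemma bexp_const (p : ℝ) (E : Finset α) (a : ℝ) : bexp p E (fun _ => a) = a := by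
  induction E using Finset.induction_on with
  | empty => simp [bexp_empty]
  | insert e E he ih => rw [bexp_insert p he, ih]; ring

lemma bexp_union (p : ℝ) {E F : Finset α} (h : Disjoint E F) (f : Finset α → ℝ) :
    bexp p (E ∪ F) f = bexp p E (fun s => bexp p F (fun t => f (s ∪ t))) := by
  induction E using Finset.induction_on generalizing f with
  | empty => simp [bexp_empty]
  | insert e E he ih =>
    rw [Finset.disjoint_insert_left] at h
    rw [Finset.insert_union, bexp_insert p (by simp [he, h.1]), bexp_insert p he, ih h.2, ih h.2]
    simp [Finset.insert_union]

lemma bexp_inter (p : ℝ) {E C : Finset α} (h : C ⊆ E) (g : Finset α → ℝ) :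
    bexp p E (fun s => g (s ∩ C)) = bexp p C g := by
  conv_lhs => rw [← Finset.union_sdiff_of_subset h]
  rw [bexp_union p Finset.disjoint_sdiff]
  refine bexp_congr p fun s hs => ?_
  rw [← bexp_const p (E \ C) (g s)]
  refine bexp_congr p fun t ht => ?_
  congr 1
  ext a
  have h1 := @hs a
  have h2 := @ht a
  simp only [Finset.mem_sdiff] at h2
  simp only [Finset.mem_inter, Finset.mem_union]
  tauto

/-- The union of two independent random subsets is a random subset. -/
lemma bexp_bexp_union (p₁ p₂ : ℝ) (E : Finset α) (f : Finset α → ℝ) :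
    bexp p₁ E (fun s => bexp p₂ E (fun t => f (s ∪ t))) =
      bexp (1 - (1 - p₁) * (1 - p₂)) E f := by
  induction E using Finset.induction_on generalizing f with
  | empty => simp [bexp_empty]
  | insert e E he ih =>
    rw [bexp_insert _ he, bexp_insert _ he]
    simp only [bexp_insert _ he, Finset.insert_union, Finset.union_insert, Finset.insert_idem]
    rw [bexp_add, bexp_add]
    simp only [bexp_const_mul]
    rw [ih f, ih (fun s => f (insert e s))]
    ring

lemma abs_bexp_sub_le {p : ℝ} (hp : 0 ≤ p) (hp1 : p ≤ 1) {E : Finset α} {f g : Finset α → ℝ}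
    {c : ℝ} (h : ∀ s ⊆ E, |f s - g s| ≤ c) : |bexp p E f - bexp p E g| ≤ c := by
  rw [← bexp_sub, abs_le]
  constructor
  · rw [← bexp_const p E (-c)]
    exact bexp_mono hp hp1 fun s hs => (abs_le.1 (h s hs)).1
  · rw [← bexp_const p E c]
    exact bexp_mono hp hp1 fun s hs => (abs_le.1 (h s hs)).2

lemma two_point_exp_le {p : ℝ} (hp : 0 ≤ p) (hp1 : p ≤ 1) {x y c : ℝ} (hc : c ≤ 1)
    (h : |x - y| ≤ c) :
    p * Real.exp x + (1 - p) * Real.exp y ≤ Real.exp (p * x + (1 - p) * y + c ^ 2) := by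
  have hc0 : 0 ≤ c := (abs_nonneg _).trans h
  set μ := p * x + (1 - p) * y with hμ
  have key : ∀ z, |z| ≤ c → Real.exp z ≤ 1 + z + c ^ 2 := fun z hz => by
    have h1 := (abs_le.1 (Real.abs_exp_sub_one_sub_id_le (hz.trans hc))).2
    have h2 : z ^ 2 ≤ c ^ 2 := sq_le_sq' (abs_le.1 hz).1 (abs_le.1 hz).2
    linarith
  have hx : |(1 - p) * (x - y)| ≤ c := by
    rw [abs_mul, abs_of_nonneg (sub_nonneg.2 hp1)]
    nlinarith [abs_nonneg (x - y)]
  have hy : |-p * (x - y)| ≤ c := by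
    rw [abs_mul, abs_neg, abs_of_nonneg hp]
    nlinarith [abs_nonneg (x - y)]
  have ex : Real.exp x = Real.exp μ * Real.exp ((1 - p) * (x - y)) := by
    rw [← Real.exp_add]; congr 1; rw [hμ]; ring
  have ey : Real.exp y = Real.exp μ * Real.exp (-p * (x - y)) := by
    rw [← Real.exp_add]; congr 1; rw [hμ]; ring
  rw [ex, ey, Real.exp_add μ]
  have h1 : p * Real.exp ((1 - p) * (x - y)) + (1 - p) * Real.exp (-p * (x - y)) ≤ 1 + c ^ 2 := by
    have := mul_le_mul_of_nonneg_left (key _ hx) hp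
    have := mul_le_mul_of_nonneg_left (key _ hy) (sub_nonneg.2 hp1)
    linarith
  calc _ = Real.exp μ *
        (p * Real.exp ((1 - p) * (x - y)) + (1 - p) * Real.exp (-p * (x - y))) := by ring
    _ ≤ _ := mul_le_mul_of_nonneg_left
        (h1.trans (by linarith [Real.add_one_le_exp (c ^ 2)])) (Real.exp_pos _).le

/-- Bounded differences: the exponential moment of a Lipschitz function of a random subset. -/
lemma bexp_exp_le {p : ℝ} (hp : 0 ≤ p) (hp1 : p ≤ 1) {E : Finset α} {f : Finset α → ℝ}
    {c : ℝ} (hc : c ≤ 1) (h : ∀ e ∈ E, ∀ s ⊆ E, |f (insert e s) - f s| ≤ c) :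
    bexp p E (fun s => Real.exp (f s)) ≤ Real.exp (bexp p E f + c ^ 2 * E.card) := by
  induction E using Finset.induction_on generalizing f with
  | empty => simp [bexp_empty]
  | insert e E he ih =>
    have hsub : ∀ s ⊆ E, s ⊆ insert e E := fun s hs => hs.trans (Finset.subset_insert _ _)
    have h0 := ih (f := f) fun a ha s hs => h a (Finset.mem_insert_of_mem ha) s (hsub s hs)
    have h1 := ih (f := fun s => f (insert e s)) fun a ha s hs => by
      rw [Finset.insert_comm]
      exact h a (Finset.mem_insert_of_mem ha) _ (Finset.insert_subset_insert _ hs)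
    have hd := abs_bexp_sub_le hp hp1 (E := E) (f := fun s => f (insert e s)) (g := f) (c := c)
      fun s hs => h e (Finset.mem_insert_self _ _) s (hsub s hs)
    rw [bexp_insert p he, bexp_insert p he, Finset.card_insert_of_notMem he]
    have h2 := two_point_exp_le hp hp1 hc hd
    calc _ ≤ p * Real.exp (bexp p E (fun s => f (insert e s)) + c ^ 2 * E.card)
          + (1 - p) * Real.exp (bexp p E f + c ^ 2 * E.card) :=
        add_le_add (mul_le_mul_of_nonneg_left h1 hp)
          (mul_le_mul_of_nonneg_left h0 (sub_nonneg.2 hp1))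
      _ = (p * Real.exp (bexp p E (fun s => f (insert e s))) + (1 - p) * Real.exp (bexp p E f))
          * Real.exp (c ^ 2 * E.card) := by rw [Real.exp_add, Real.exp_add]; ring
      _ ≤ _ * Real.exp (c ^ 2 * E.card) :=
        mul_le_mul_of_nonneg_right h2 (Real.exp_pos _).le
      _ = _ := by rw [← Real.exp_add]; congr 1; push_cast; ring

lemma bexp_upper_tail {p : ℝ} (hp : 0 ≤ p) (hp1 : p ≤ 1) {E : Finset α} {f : Finset α → ℝ}
    {c l : ℝ} (hl : 0 < l) (hc : l * c ≤ 1) (h : ∀ e ∈ E, ∀ s ⊆ E, |f (insert e s) - f s| ≤ c)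
    (a : ℝ) :
    bexp p E (fun s => if a ≤ f s - bexp p E f then 1 else 0) ≤
      Real.exp ((l * c) ^ 2 * E.card - l * a) := by
  have h1 := bexp_exp_le hp hp1 (f := fun s => l * f s) hc fun e he s hs => by
    rw [← mul_sub, abs_mul, abs_of_pos hl]
    exact mul_le_mul_of_nonneg_left (h e he s hs) hl.le
  rw [bexp_const_mul] at h1
  calc _ ≤ bexp p E (fun s => Real.exp (-l * a - l * bexp p E f) * Real.exp (l * f s)) := by
        refine bexp_mono hp hp1 fun s _ => ?_
        rw [← Real.exp_add]
        split_ifs with hs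
        · apply Real.one_le_exp
          nlinarith
        · exact (Real.exp_pos _).le
    _ ≤ Real.exp (-l * a - l * bexp p E f) * Real.exp (l * bexp p E f + (l * c) ^ 2 * E.card) := by
        rw [bexp_const_mul]
        exact mul_le_mul_of_nonneg_left h1 (Real.exp_pos _).le
    _ = _ := by rw [← Real.exp_add]; congr 1; ring

/-- Two-sided concentration of a Lipschitz function of a random subset. -/
lemma bexp_tail {p : ℝ} (hp : 0 ≤ p) (hp1 : p ≤ 1) {E : Finset α} {f : Finset α → ℝ}
    {c η D N : ℝ} (hc : 1 ≤ c) (hη : 0 < η) (hη1 : η ≤ 1) (hD : 1 ≤ D) (hE : E.card ≤ D * N)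
    (h : ∀ e ∈ E, ∀ s ⊆ E, |f (insert e s) - f s| ≤ c) :
    bexp p E (fun s => if η * N ≤ |f s - bexp p E f| then 1 else 0) ≤
      2 * Real.exp (-(η ^ 2 / (4 * c ^ 2 * D)) * N) := by
  have hc0 : 0 < c := by linarith
  have hD0 : 0 < D := by linarith
  set l := η / (2 * c ^ 2 * D) with hl
  have hl0 : 0 < l := by positivity
  have hlc : l * c ≤ 1 := by
    rw [hl, div_mul_eq_mul_div, div_le_one (by positivity)]
    nlinarith [mul_le_mul hc hD (by norm_num) hc0.le, mul_pos hc0 hD0, mul_pos hc0 hc0]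
  have hexp : (l * c) ^ 2 * E.card - l * (η * N) ≤ -(η ^ 2 / (4 * c ^ 2 * D)) * N := by
    have h1 : (l * c) ^ 2 * E.card ≤ (l * c) ^ 2 * (D * N) :=
      mul_le_mul_of_nonneg_left hE (by positivity)
    have h2 : (l * c) ^ 2 * (D * N) - l * (η * N) = -(η ^ 2 / (4 * c ^ 2 * D)) * N := by
      rw [hl]; field_simp; ring
    linarith
  have hup := (bexp_upper_tail hp hp1 hl0 hlc h (η * N)).trans (Real.exp_le_exp.2 hexp)
  have hneg : bexp p E (fun s => -f s) = -bexp p E f := by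
    simpa using bexp_const_mul p E (-1) f
  have hlo := (bexp_upper_tail hp hp1 (f := fun s => -f s) hl0 hlc (fun e he s hs => by
    rw [← abs_neg]; convert h e he s hs using 2; ring) (η * N)).trans (Real.exp_le_exp.2 hexp)
  rw [two_mul]
  refine le_trans ?_ (add_le_add hup hlo)
  rw [← bexp_add]
  refine bexp_mono hp hp1 fun s _ => ?_
  rw [hneg]
  by_cases h1 : η * N ≤ |f s - bexp p E f|
  · rw [if_pos h1]
    rcases le_abs.1 h1 with h2 | h2
    · rw [if_pos h2]
      have : (0:ℝ) ≤ if η * N ≤ -f s - -bexp p E f then 1 else 0 := by split_ifs <;> norm_num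
      linarith
    · rw [if_pos (show η * N ≤ -f s - -bexp p E f by linarith)]
      have : (0:ℝ) ≤ if η * N ≤ f s - bexp p E f then 1 else 0 := by split_ifs <;> norm_num
      linarith
  · rw [if_neg h1]
    refine add_nonneg ?_ ?_ <;> split_ifs <;> norm_num

lemma bexp_ne_self (p : ℝ) (E : Finset α) :
    bexp p E (fun s => if s = E then 0 else 1) = 1 - p ^ E.card := by
  have h := bexp_const p E 1
  have h2 : bexp p E (fun s => if s = E then 1 else 0) = p ^ E.card := by
    simp only [bexp, mul_ite, mul_one, mul_zero]
    rw [Finset.sum_ite_eq' E.powerset E]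
    simp
  rw [← h2, eq_sub_iff_add_eq, ← bexp_add]
  refine (bexp_congr p fun s _ => ?_).trans h
  split_ifs <;> norm_num

/-- The probability that a random subset contains none of many small disjoint sets. -/
lemma bexp_avoid_le {p : ℝ} (hp : 0 ≤ p) (hp1 : p ≤ 1) {L : ℕ} (𝒬 : Finset (Finset α))
    {E : Finset α} (hd : (𝒬 : Set (Finset α)).PairwiseDisjoint id) (hE : ∀ Q ∈ 𝒬, Q ⊆ E)
    (hL : ∀ Q ∈ 𝒬, Q.card ≤ L) :
    bexp p E (fun t => if ∀ Q ∈ 𝒬, ¬ Q ⊆ t then 1 else 0) ≤ (1 - p ^ L) ^ 𝒬.card := by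
  induction 𝒬 using Finset.induction_on generalizing E with
  | empty => simp [bexp_const]
  | insert Q 𝒬 hQ ih =>
    have hQE : Q ⊆ E := hE Q (Finset.mem_insert_self _ _)
    have hdis : ∀ Q' ∈ 𝒬, Disjoint Q' Q := fun Q' hQ' =>
      hd (by simp [hQ']) (by simp) (fun h => hQ (h ▸ hQ'))
    have ih' := ih (E := E \ Q) (hd.subset (by simp)) (fun Q' hQ' =>
      Finset.subset_sdiff.2 ⟨hE Q' (Finset.mem_insert_of_mem hQ'), hdis Q' hQ'⟩)
      (fun Q' hQ' => hL Q' (Finset.mem_insert_of_mem hQ'))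
    rw [← Finset.union_sdiff_of_subset hQE, bexp_union p Finset.disjoint_sdiff,
      Finset.card_insert_of_notMem hQ, pow_succ]
    calc _ ≤ bexp p Q (fun s => (bexp p (E \ Q)
            (fun t => if ∀ Q' ∈ 𝒬, ¬ Q' ⊆ t then 1 else 0)) * if s = Q then 0 else 1) := by
          refine bexp_mono hp hp1 fun s hs => ?_
          by_cases hsQ : s = Q
          · simp [hsQ, bexp_const]
          · rw [if_neg hsQ, mul_one]
            refine bexp_mono hp hp1 fun t ht => ?_
            by_cases h1 : ∀ Q' ∈ 𝒬, ¬ Q' ⊆ t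
            · rw [if_pos h1]; split_ifs <;> norm_num
            · rw [if_neg h1, if_neg]
              push Not at h1 ⊢
              obtain ⟨Q', hQ', h2⟩ := h1
              exact ⟨Q', Finset.mem_insert_of_mem hQ', h2.trans Finset.subset_union_right⟩
      _ = bexp p (E \ Q) (fun t => if ∀ Q' ∈ 𝒬, ¬ Q' ⊆ t then 1 else 0) * (1 - p ^ Q.card) := by
          rw [bexp_const_mul, bexp_ne_self]
      _ ≤ _ := by
          refine mul_le_mul ih' ?_ (sub_nonneg.2 (pow_le_one₀ hp hp1))
            (pow_nonneg (sub_nonneg.2 (pow_le_one₀ hp hp1)) _)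
          have := pow_le_pow_of_le_one hp hp1 (hL Q (Finset.mem_insert_self _ _))
          linarith

end RandomSubset

section Geometry

/-- All cycles of `G` have length at least `g`. -/
def CyclesGE (G : SimpleGraph V) (g : ℕ) : Prop :=
  ∀ (v : V) (c : G.Walk v v), c.IsCycle → g ≤ c.length

variable {G : SimpleGraph V} {g : ℕ}

lemma path_eq_of_length_add_lt (hg : CyclesGE G g) {u v : V} {p q : G.Walk u v}
    (hp : p.IsPath) (hq : q.IsPath) (h : p.length + q.length < g) : p = q := by
  set S : Finset (Sym2 V) := p.edges.toFinset ∪ q.edges.toFinset with hS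
  set H : SimpleGraph V := SimpleGraph.fromEdgeSet (S : Set (Sym2 V)) with hH
  have hHG : H ≤ G := by
    intro a b hab
    rw [hH, SimpleGraph.fromEdgeSet_adj] at hab
    have : s(a, b) ∈ S := hab.1
    rw [hS, Finset.mem_union, List.mem_toFinset, List.mem_toFinset] at this
    rcases this with h | h
    · exact p.adj_of_mem_edges h
    · exact q.adj_of_mem_edges h
  have hcard : S.card ≤ p.length + q.length := by
    refine (Finset.card_union_le _ _).trans (add_le_add ?_ ?_)
    · exact (List.toFinset_card_le _).trans_eq p.length_edges
    · exact (List.toFinset_card_le _).trans_eq q.length_edges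
  have hac : H.IsAcyclic := by
    intro w c hc
    have h1 := hg w (c.mapLe hHG) (hc.mapLe hHG)
    rw [SimpleGraph.Walk.length_mapLe] at h1
    have h2 : c.length ≤ S.card := by
      rw [← c.length_edges, ← List.toFinset_card_of_nodup hc.edges_nodup]
      refine Finset.card_le_card fun e he => ?_
      have := c.edges_subset_edgeSet (List.mem_toFinset.1 he)
      rw [hH, SimpleGraph.edgeSet_fromEdgeSet] at this
      exact this.1
    omega
  have hpe : ∀ e ∈ p.edges, e ∈ H.edgeSet := fun e he => by
    rw [hH, SimpleGraph.edgeSet_fromEdgeSet]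
    exact ⟨by simp [hS, he], G.not_isDiag_of_mem_edgeSet (p.edges_subset_edgeSet he)⟩
  have hqe : ∀ e ∈ q.edges, e ∈ H.edgeSet := fun e he => by
    rw [hH, SimpleGraph.edgeSet_fromEdgeSet]
    exact ⟨by simp [hS, he], G.not_isDiag_of_mem_edgeSet (q.edges_subset_edgeSet he)⟩
  have := congrArg Subtype.val
    ((hac.subsingleton_path u v).elim ⟨p.transfer H hpe, hp.transfer hpe⟩
      ⟨q.transfer H hqe, hq.transfer hqe⟩)
  have hs := congrArg SimpleGraph.Walk.support this
  simp only [SimpleGraph.Walk.support_transfer] at hs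
  exact SimpleGraph.Walk.ext_support hs

lemma exists_path_concat (hc : G.Connected) {x u v : V} (h : G.Adj u v)
    (hle : G.dist x u ≤ G.dist x v) :
    ∃ p : G.Walk x u, (p.concat h).IsPath ∧ p.length = G.dist x u := by
  obtain ⟨p, hp, hl⟩ := hc.exists_path_of_dist x u
  refine ⟨p, hp.concat (fun hv => ?_) h, hl⟩
  have h1 := SimpleGraph.Walk.length_takeUntil_lt_length hv h.ne'
  have h2 := SimpleGraph.dist_le (p.takeUntil v hv)
  omega

lemma parent_unique (hc : G.Connected) (hg : CyclesGE G g) {x u u' v : V} {i : ℕ} (h : G.Adj u v)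
    (h' : G.Adj u' v)
    (hu : G.dist x u = i) (hu' : G.dist x u' = i) (hv : G.dist x v = i + 1)
    (hi : 2 * i + 2 < g) : u = u' := by
  obtain ⟨p, hp, hl⟩ := exists_path_concat hc h (by omega : G.dist x u ≤ G.dist x v)
  obtain ⟨p', hp', hl'⟩ := exists_path_concat hc h' (by omega : G.dist x u' ≤ G.dist x v)
  have := path_eq_of_length_add_lt hg hp hp' (by
    rw [SimpleGraph.Walk.length_concat, SimpleGraph.Walk.length_concat]; omega)
  exact (SimpleGraph.Walk.concat_inj this).1

lemma dist_ne_of_adj_of_lt (hc : G.Connected) (hg : CyclesGE G g) {x u v : V} (h : G.Adj u v)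
    (hi : 2 * G.dist x u + 1 < g) : G.dist x u ≠ G.dist x v := by
  intro he
  obtain ⟨p, hp, hl⟩ := exists_path_concat hc h he.le
  obtain ⟨q, hq, hl'⟩ := hc.exists_path_of_dist x v
  have := path_eq_of_length_add_lt hg hp hq (by
    rw [SimpleGraph.Walk.length_concat]; omega)
  have := congrArg SimpleGraph.Walk.length this
  rw [SimpleGraph.Walk.length_concat] at this
  omega

lemma dist_le_dist_add_one (hc : G.Connected) {x u v : V} (h : G.Adj u v) :
    G.dist x v ≤ G.dist x u + 1 := by
  have := hc.dist_triangle (u := x) (v := u) (w := v)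
  rwa [SimpleGraph.dist_eq_one_iff_adj.2 h] at this

lemma exists_parent (hc : G.Connected) {x v : V} {i : ℕ} (hv : G.dist x v = i + 1) :
    ∃ u, G.Adj u v ∧ G.dist x u = i := by
  obtain ⟨p, hl⟩ := hc.exists_walk_length_eq_dist x v
  have hnil : ¬ p.Nil := by
    rw [← SimpleGraph.Walk.length_eq_zero_iff]; omega
  have hadj := p.adj_penultimate hnil
  refine ⟨_, hadj, ?_⟩
  have h1 := SimpleGraph.dist_le p.dropLast
  have h2 := congrArg SimpleGraph.Walk.length (p.concat_dropLast hadj)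
  rw [SimpleGraph.Walk.length_concat] at h2
  have h3 := dist_le_dist_add_one hc (x := x) hadj
  omega

/-- The neighbours of `v` one step further away from `x`. -/
def children (G : SimpleGraph V) (x v : V) : Finset V :=
  Finset.univ.filter fun w => G.Adj v w ∧ G.dist x w = G.dist x v + 1

lemma card_children_root {d : ℕ} (hd : ∀ v, (G.neighborSet v).ncard = d) (x : V) :
    (children G x x).card = d := by
  rw [← hd x, ← Set.ncard_coe_finset]
  congr 1
  ext w
  simp only [children, Finset.coe_filter, Finset.mem_univ, true_and, Set.mem_ofPred_eq,
    SimpleGraph.mem_neighborSet, SimpleGraph.dist_self, zero_add,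
    SimpleGraph.dist_eq_one_iff_adj, and_self]

lemma card_children (hc : G.Connected) (hg : CyclesGE G g) {d : ℕ}
    (hd : ∀ v, (G.neighborSet v).ncard = d)
    {x v : V} (h0 : G.dist x v ≠ 0) (hi : 2 * G.dist x v + 1 < g) :
    (children G x v).card = d - 1 := by
  obtain ⟨i, hiv⟩ := Nat.exists_eq_succ_of_ne_zero h0
  obtain ⟨u, huv, hu⟩ := exists_parent hc hiv
  have : insert u (children G x v : Set V) = G.neighborSet v := by
    ext w
    simp only [children, Finset.coe_filter, Finset.mem_univ, true_and, Set.mem_insert_iff,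
      Set.mem_ofPred_eq, SimpleGraph.mem_neighborSet]
    constructor
    · rintro (rfl | h)
      · exact huv.symm
      · exact h.1
    · intro h
      have h1 := dist_le_dist_add_one hc (x := x) h
      have h2 := dist_le_dist_add_one hc (x := x) h.symm
      have h3 := dist_ne_of_adj_of_lt hc hg h hi
      by_cases h4 : G.dist x w = G.dist x v + 1
      · exact Or.inr ⟨h, h4⟩
      · left
        exact parent_unique hc hg h.symm huv (by omega : G.dist x w = i) hu hiv (by omega)
  have hn : u ∉ (children G x v : Set V) := by
    simp [children]; omega
  rw [← hd v, ← this, Set.ncard_insert_of_notMem hn, Set.ncard_coe_finset]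
  simp

lemma card_ball_le (hc : G.Connected) {d : ℕ} (hd : ∀ v, (G.neighborSet v).ncard ≤ d)
    (x : V) (m : ℕ) :
    (Finset.univ.filter fun v => G.dist x v ≤ m).card ≤ (d + 1) ^ m := by
  induction m with
  | zero =>
    rw [pow_zero, Finset.card_le_one]
    intro a ha b hb
    simp only [Finset.mem_filter, Finset.mem_univ, true_and, Nat.le_zero,
      hc.dist_eq_zero_iff] at ha hb
    rw [← ha, ← hb]
  | succ m ih =>
    have hsub : (Finset.univ.filter fun v => G.dist x v ≤ m + 1) ⊆
        (Finset.univ.filter fun v => G.dist x v ≤ m).biUnion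
          fun u => insert u (G.neighborSet u).toFinset := by
      intro v hv
      simp only [Finset.mem_filter, Finset.mem_univ, true_and, Finset.mem_biUnion,
        Finset.mem_insert, Set.mem_toFinset, SimpleGraph.mem_neighborSet] at hv ⊢
      rcases hv.lt_or_eq with h | h
      · exact ⟨v, by omega, Or.inl rfl⟩
      · obtain ⟨u, huv, hu⟩ := exists_parent hc h
        exact ⟨u, hu.le, Or.inr huv⟩
    refine (Finset.card_le_card hsub).trans ((Finset.card_biUnion_le_card_mul _ _ (d + 1)
      fun u _ => ?_).trans ?_)
    · refine (Finset.card_insert_le _ _).trans (Nat.succ_le_succ ?_)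
      rw [← Set.ncard_eq_toFinset_card']
      exact hd u
    · rw [pow_succ]
      exact Nat.mul_le_mul_right _ ih

end Geometry

section Front

/-- The vertices at distance `i` from `x` in `G` that are joined to `x` by a geodesic of `G` all of
whose edges lie in `s`. -/
def front (G : SimpleGraph V) (x : V) (s : Finset (Sym2 V)) : ℕ → Finset V
  | 0 => {x}
  | i + 1 => Finset.univ.filter fun w => G.dist x w = i + 1 ∧ ∃ v ∈ front G x s i, s(v, w) ∈ s

variable {G : SimpleGraph V} {g : ℕ} {x : V} {s : Finset (Sym2 V)}

lemma mem_edgeFinset' {e : Sym2 V} : e ∈ edgeFinset' G ↔ e ∈ G.edgeSet := by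
  simp [edgeFinset']

lemma mem_front_succ {i : ℕ} {w : V} : w ∈ front G x s (i + 1) ↔
    G.dist x w = i + 1 ∧ ∃ v ∈ front G x s i, s(v, w) ∈ s := by
  simp [front]

lemma dist_of_mem_front {i : ℕ} {w : V} (h : w ∈ front G x s i) : G.dist x w = i := by
  cases i with
  | zero => simp only [front, Finset.mem_singleton] at h; simp [h]
  | succ i => exact (mem_front_succ.1 h).1

lemma front_nonempty_of_le {i j : ℕ} (hij : i ≤ j) (h : (front G x s j).Nonempty) :
    (front G x s i).Nonempty := by
  induction j, hij using Nat.le_induction with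
  | base => exact h
  | succ j _ ih =>
    obtain ⟨w, hw⟩ := h
    obtain ⟨v, hv, -⟩ := (mem_front_succ.1 hw).2
    exact ih ⟨v, hv⟩

lemma reachable_of_mem_front {i : ℕ} {w : V} (h : w ∈ front G x s i) :
    (SimpleGraph.fromEdgeSet (s : Set (Sym2 V))).Reachable x w := by
  induction i generalizing w with
  | zero => simp only [front, Finset.mem_singleton] at h; rw [h]
  | succ i ih =>
    obtain ⟨hd, v, hv, hs⟩ := mem_front_succ.1 h
    refine (ih hv).trans (SimpleGraph.Adj.reachable ?_)
    rw [SimpleGraph.fromEdgeSet_adj]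
    refine ⟨hs, fun hvw => ?_⟩
    have := dist_of_mem_front hv
    rw [hvw] at this
    omega

lemma le_card_comp_of_front_nonempty {m : ℕ} (h : (front G x s m).Nonempty) :
    m + 1 ≤ (compVerts (SimpleGraph.fromEdgeSet (s : Set (Sym2 V)))
      ((SimpleGraph.fromEdgeSet (s : Set (Sym2 V))).connectedComponentMk x)).card := by
  have hne : ∀ i : Fin (m + 1), ∃ v, v ∈ front G x s i :=
    fun i => front_nonempty_of_le (Nat.lt_succ_iff.1 i.2) h
  choose v hv using hne
  rw [← Fintype.card_fin (m + 1), ← Finset.card_univ]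
  refine Finset.card_le_card_of_injOn v (fun i _ => ?_) (fun i _ j _ hij => ?_)
  · simp only [compVerts, Finset.coe_filter, Finset.mem_univ, true_and, Set.mem_ofPred_eq,
      SimpleGraph.ConnectedComponent.eq]
    exact (reachable_of_mem_front (hv i)).symm
  · have h1 := dist_of_mem_front (hv i)
    have h2 := dist_of_mem_front (hv j)
    rw [hij] at h1
    exact Fin.ext (h1.symm.trans h2)

lemma mem_front_of_reachable (hc : G.Connected) (hg : CyclesGE G g) (hs : s ⊆ edgeFinset' G)
    {m : ℕ} (hm : 2 * m < g) (h : front G x s m = ∅) {w : V}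
    (hr : (SimpleGraph.fromEdgeSet (s : Set (Sym2 V))).Reachable x w) :
    ∃ i < m, w ∈ front G x s i := by
  rw [SimpleGraph.reachable_iff_reflTransGen] at hr
  induction hr with
  | refl =>
    refine ⟨0, Nat.pos_of_ne_zero fun h0 => ?_, by simp [front]⟩
    subst h0
    simp [front] at h
  | @tail v w _ hvw ih =>
    obtain ⟨i, hi, hv⟩ := ih
    rw [SimpleGraph.fromEdgeSet_adj] at hvw
    have hdv := dist_of_mem_front hv
    have hadj : G.Adj v w := mem_edgeFinset'.1 (hs hvw.1)
    have h1 := dist_le_dist_add_one hc (x := x) hadj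
    have h2 := dist_le_dist_add_one hc (x := x) hadj.symm
    have h3 := dist_ne_of_adj_of_lt hc hg (x := x) hadj (by omega)
    by_cases h4 : G.dist x w = i + 1
    · have hw : w ∈ front G x s (i + 1) := mem_front_succ.2 ⟨h4, v, hv, hvw.1⟩
      refine ⟨i + 1, lt_of_le_of_ne hi fun h5 => ?_, hw⟩
      rw [h5, h] at hw
      simp at hw
    · obtain ⟨j, rfl⟩ : ∃ j, i = j + 1 := ⟨i - 1, by omega⟩
      obtain ⟨-, u, hu, hus⟩ := mem_front_succ.1 hv
      have huv : G.Adj u v := mem_edgeFinset'.1 (hs hus)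
      have := parent_unique hc hg huv hadj.symm (dist_of_mem_front hu)
        (by omega : G.dist x w = j) hdv (by omega)
      exact ⟨j, by omega, this ▸ hu⟩

lemma card_comp_le_of_front_eq_empty (hc : G.Connected) (hg : CyclesGE G g)
    (hs : s ⊆ edgeFinset' G) {d : ℕ} (hd : ∀ v, (G.neighborSet v).ncard ≤ d)
    {m : ℕ} (hm : 2 * m < g) (h : front G x s m = ∅) :
    (compVerts (SimpleGraph.fromEdgeSet (s : Set (Sym2 V)))
      ((SimpleGraph.fromEdgeSet (s : Set (Sym2 V))).connectedComponentMk x)).card ≤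
      (d + 1) ^ m := by
  refine le_trans (Finset.card_le_card fun w hw => ?_) (card_ball_le hc hd x m)
  simp only [compVerts, Finset.mem_filter, Finset.mem_univ, true_and,
    SimpleGraph.ConnectedComponent.eq] at hw ⊢
  obtain ⟨i, hi, hwi⟩ := mem_front_of_reachable hc hg hs hm h hw.symm
  rw [dist_of_mem_front hwi]
  omega

lemma front_insert_of_dist_gt {u v : V} {m : ℕ} (h : m < G.dist x u) {i : ℕ} (hi : i ≤ m) :
    front G x (insert s(u, v) s) i = front G x s i := by
  induction i with
  | zero => rfl
  | succ i ih =>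
    ext w
    rw [mem_front_succ, mem_front_succ, ih (by omega)]
    refine and_congr_right fun hw => ?_
    refine exists_congr fun a => and_congr_right fun ha => ?_
    rw [Finset.mem_insert, or_iff_right]
    intro he
    have hda := dist_of_mem_front ha
    rcases Sym2.eq_iff.1 he with ⟨rfl, -⟩ | ⟨-, rfl⟩ <;> omega

lemma ncard_neighborSet_eq (hs : s ⊆ edgeFinset' G) :
    ((SimpleGraph.fromEdgeSet (s : Set (Sym2 V))).neighborSet x).ncard =
      (front G x s 1).card := by
  rw [← Set.ncard_coe_finset]
  congr 1
  ext w
  rw [Finset.mem_coe, mem_front_succ]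
  simp only [SimpleGraph.mem_neighborSet, SimpleGraph.fromEdgeSet_adj, Finset.mem_coe,
    front, Finset.mem_singleton, exists_eq_left, zero_add, SimpleGraph.dist_eq_one_iff_adj]
  constructor
  · rintro ⟨h, -⟩
    exact ⟨mem_edgeFinset'.1 (hs h), h⟩
  · rintro ⟨h, h'⟩
    exact ⟨h', h.ne⟩

/-- The edges of `G` from `F` to the sphere of radius `i + 1` around `x`. -/
def outEdges (G : SimpleGraph V) (x : V) (i : ℕ) (F : Finset V) : Finset (Sym2 V) :=
  (edgeFinset' G).filter fun e => ∃ v ∈ F, ∃ w, G.dist x w = i + 1 ∧ e = s(v, w)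

lemma outEdges_subset {i : ℕ} {F : Finset V} : outEdges G x i F ⊆ edgeFinset' G :=
  Finset.filter_subset _ _

lemma card_outEdges {i D : ℕ} {F : Finset V} (hF : ∀ v ∈ F, G.dist x v = i)
    (hD : ∀ v ∈ F, (children G x v).card = D) : (outEdges G x i F).card = F.card * D := by
  have : outEdges G x i F = F.biUnion fun v => (children G x v).image fun w => s(v, w) := by
    ext e
    simp only [outEdges, Finset.mem_filter, mem_edgeFinset', Finset.mem_biUnion, Finset.mem_image,
      children, Finset.mem_univ, true_and]
    constructor
    · rintro ⟨he, v, hv, w, hw, rfl⟩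
      exact ⟨v, hv, w, ⟨he, by rw [hF v hv, hw]⟩, rfl⟩
    · rintro ⟨v, hv, w, ⟨h, hw⟩, rfl⟩
      exact ⟨h, v, hv, w, by rw [hw, hF v hv], rfl⟩
  rw [this, Finset.card_biUnion]
  · rw [Finset.sum_const_nat]
    intro v hv
    rw [Finset.card_image_of_injective _ fun a b hab => Sym2.congr_right.1 hab, hD v hv]
  · intro v hv v' hv' hne
    rw [Function.onFun, Finset.disjoint_left]
    simp only [Finset.mem_image, children, Finset.mem_filter, Finset.mem_univ, true_and]
    rintro e ⟨w, ⟨-, hw⟩, rfl⟩ ⟨w', ⟨-, hw'⟩, he⟩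
    rw [hF v hv] at hw
    rw [hF v' hv'] at hw'
    rcases Sym2.eq_iff.1 he with ⟨h, -⟩ | ⟨h, -⟩
    · exact hne h.symm
    · have := hF v' hv'
      rw [h] at this
      omega

lemma card_front_succ (hc : G.Connected) (hg : CyclesGE G g) (hs : s ⊆ edgeFinset' G)
    {i : ℕ} (hi : 2 * i + 2 < g) :
    (front G x s (i + 1)).card = (s ∩ outEdges G x i (front G x s i)).card := by
  have key : ∀ w ∈ front G x s (i + 1), ∃ v ∈ front G x s i, s(v, w) ∈ s :=
    fun w hw => (mem_front_succ.1 hw).2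
  choose! f hf hfs using key
  refine Finset.card_nbij (fun w => s(f w, w)) (fun w hw => ?_) (fun w hw w' hw' h => ?_)
    (fun e he => ?_)
  · have := hfs w hw
    simp only [outEdges, Finset.coe_inter, Finset.coe_filter, Set.mem_inter_iff, Finset.mem_coe,
      Set.mem_ofPred_eq]
    exact ⟨this, hs this, f w, hf w hw, w, dist_of_mem_front hw, rfl⟩
  · rcases Sym2.eq_iff.1 h with ⟨-, h⟩ | ⟨h, -⟩
    · exact h
    · have h1 := dist_of_mem_front (hf w hw)
      have h2 := dist_of_mem_front hw'
      rw [h] at h1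
      omega
  · simp only [outEdges, Finset.coe_inter, Finset.coe_filter, Set.mem_inter_iff, Finset.mem_coe,
      Set.mem_ofPred_eq] at he
    obtain ⟨hes, heG, v, hv, w, hw, rfl⟩ := he
    have hwf : w ∈ front G x s (i + 1) := mem_front_succ.2 ⟨hw, v, hv, hes⟩
    refine ⟨w, hwf, ?_⟩
    have : f w = v := parent_unique hc hg (mem_edgeFinset'.1 (hs (hfs w hwf)))
      (mem_edgeFinset'.1 heG)
      (dist_of_mem_front (hf w hwf)) (dist_of_mem_front hv) hw hi
    exact congrArg (fun a => s(a, w)) this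

lemma front_union_of_disjoint {t : Finset (Sym2 V)} {i : ℕ}
    (ht : t ⊆ outEdges G x i (Finset.univ.filter fun v => G.dist x v = i)) {j : ℕ} (hj : j ≤ i) :
    front G x (s ∪ t) j = front G x s j := by
  induction j with
  | zero => rfl
  | succ j ih =>
    ext w
    rw [mem_front_succ, mem_front_succ, ih (by omega)]
    refine and_congr_right fun hw => ?_
    refine exists_congr fun a => and_congr_right fun ha => ?_
    rw [Finset.mem_union, or_iff_left]
    intro he
    have hda := dist_of_mem_front ha
    have := ht he
    simp only [outEdges, Finset.mem_filter, Finset.mem_univ, true_and] at this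
    obtain ⟨-, v, hv, w', hw', he⟩ := this
    rcases Sym2.eq_iff.1 he with ⟨rfl, rfl⟩ | ⟨rfl, rfl⟩ <;> omega

end Front

section LocalLimit

/-- Generating function of the binomial `(d - 1, p)` offspring law. -/
def offspring (p : ℝ) (d : ℕ) (r : ℝ) : ℝ := (1 - p + p * r) ^ (d - 1)

lemma bexp_pow_card {α : Type*} (p r : ℝ) (C : Finset α) :
    bexp p C (fun s => r ^ s.card) = (1 - p + p * r) ^ C.card := by
  rw [bexp_card p C fun j => r ^ j, add_comm (1 - p), add_pow]
  refine Finset.sum_congr rfl fun j _ => ?_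
  rw [mul_pow]
  ring

variable {G : SimpleGraph V} {g d : ℕ}

lemma bexp_front_succ (hc : G.Connected) (hg : CyclesGE G g)
    (hd : ∀ v, (G.neighborSet v).ncard = d) (p r : ℝ) (x : V) (φ : ℕ → ℝ) {i : ℕ} (h1 : 1 ≤ i)
    (hi : 2 * i + 2 < g) :
    bexp p (edgeFinset' G) (fun s => φ (front G x s 1).card * r ^ (front G x s (i + 1)).card) =
      bexp p (edgeFinset' G)
        (fun s => φ (front G x s 1).card * offspring p d r ^ (front G x s i).card) := by
  set Ei := outEdges G x i (Finset.univ.filter fun v => G.dist x v = i) with hEi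
  have hsub : Ei ⊆ edgeFinset' G := outEdges_subset
  rw [← Finset.sdiff_union_of_subset hsub, bexp_union p Finset.sdiff_disjoint,
    bexp_union p Finset.sdiff_disjoint]
  refine bexp_congr p fun s hs => ?_
  set C := outEdges G x i (front G x s i) with hC
  have hCE : C ⊆ Ei := by
    intro e he
    simp only [hC, hEi, outEdges, Finset.mem_filter, Finset.mem_univ, true_and] at he ⊢
    obtain ⟨he, v, hv, h⟩ := he
    exact ⟨he, v, dist_of_mem_front hv, h⟩
  have hCcard : C.card = (front G x s i).card * (d - 1) :=
    card_outEdges (fun v hv => dist_of_mem_front hv) fun v hv => by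
      have := dist_of_mem_front hv
      exact card_children hc hg hd (x := x) (by omega) (by omega)
  have hR : ∀ t ⊆ Ei, φ (front G x (s ∪ t) 1).card * offspring p d r ^ (front G x (s ∪ t) i).card =
      φ (front G x s 1).card * offspring p d r ^ (front G x s i).card := fun t ht => by
    rw [front_union_of_disjoint ht h1, front_union_of_disjoint ht le_rfl]
  rw [bexp_congr p hR, bexp_const]
  have hL : ∀ t ⊆ Ei, φ (front G x (s ∪ t) 1).card * r ^ (front G x (s ∪ t) (i + 1)).card =
      φ (front G x s 1).card * r ^ (t ∩ C).card := fun t ht => by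
    rw [front_union_of_disjoint ht h1, card_front_succ hc hg
      (Finset.union_subset (hs.trans Finset.sdiff_subset) (ht.trans hsub)) hi,
      front_union_of_disjoint ht le_rfl, ← hC, Finset.union_inter_distrib_right]
    have : s ∩ C = ∅ := Finset.disjoint_iff_inter_eq_empty.1
      ((Finset.disjoint_of_subset_left hs Finset.sdiff_disjoint).mono_right hCE)
    rw [this, Finset.empty_union]
  rw [bexp_congr p hL, bexp_const_mul, bexp_inter p hCE (fun s => r ^ s.card), bexp_pow_card,
    hCcard, offspring, ← pow_mul, mul_comm (d - 1)]

lemma bexp_front_iterate (hc : G.Connected) (hg : CyclesGE G g)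
    (hd : ∀ v, (G.neighborSet v).ncard = d) (p r : ℝ) (x : V) (φ : ℕ → ℝ) {j : ℕ}
    (hj : 2 * j + 2 < g) :
    bexp p (edgeFinset' G) (fun s => φ (front G x s 1).card * r ^ (front G x s (j + 1)).card) =
      bexp p (edgeFinset' G)
        (fun s => φ (front G x s 1).card * ((offspring p d)^[j] r) ^ (front G x s 1).card) := by
  induction j generalizing r with
  | zero => rfl
  | succ j ih =>
    rw [bexp_front_succ hc hg hd p r x φ (by omega) (by omega), ih _ (by omega)]
    rfl

lemma bexp_degree (hc : G.Connected) (hg : CyclesGE G g) (h2 : 2 < g)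
    (hd : ∀ v, (G.neighborSet v).ncard = d) (p : ℝ) (x : V) (φ : ℕ → ℝ) :
    bexp p (edgeFinset' G) (fun s => φ (front G x s 1).card) =
      ∑ j ∈ Finset.range (d + 1), (d.choose j : ℝ) * (p ^ j * (1 - p) ^ (d - j) * φ j) := by
  have hcard : (outEdges G x 0 {x}).card = d := by
    rw [card_outEdges (D := d)]
    · simp
    · simp
    · intro v hv
      rw [Finset.mem_singleton.1 hv]
      exact card_children_root hd x
  have h := bexp_inter p (outEdges_subset (G := G) (x := x) (i := 0) (F := {x}))
    (fun s => φ s.card)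
  rw [bexp_card p _ φ, hcard] at h
  rw [← h]
  exact bexp_congr p fun s hs => by rw [card_front_succ hc hg hs h2, front]

/-- The sum over vertices `x` whose cluster reaches distance `m` of `φ` of the degree of `x`. -/
def survivors (G : SimpleGraph V) (m : ℕ) (φ : ℕ → ℝ) (s : Finset (Sym2 V)) : ℝ :=
  ∑ x, φ (front G x s 1).card * (1 - 0 ^ (front G x s m).card)

/-- The per-vertex expectation of `survivors` in the tree limit. -/
def survivalMean (p : ℝ) (d j : ℕ) (φ : ℕ → ℝ) : ℝ :=
  ∑ k ∈ Finset.range (d + 1),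
    (d.choose k : ℝ) * (p ^ k * (1 - p) ^ (d - k) * (φ k * (1 - ((offspring p d)^[j] 0) ^ k)))

lemma bexp_survivors (hc : G.Connected) (hg : CyclesGE G g)
    (hd : ∀ v, (G.neighborSet v).ncard = d) (p : ℝ) (φ : ℕ → ℝ) {j : ℕ} (hj : 2 * j + 2 < g) :
    bexp p (edgeFinset' G) (survivors G (j + 1) φ) = Fintype.card V * survivalMean p d j φ := by
  have : ∀ x : V, bexp p (edgeFinset' G)
      (fun s => φ (front G x s 1).card * (1 - 0 ^ (front G x s (j + 1)).card)) =
      survivalMean p d j φ := fun x => by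
    simp only [mul_sub, mul_one]
    rw [bexp_sub, bexp_front_iterate hc hg hd p 0 x φ hj, ← bexp_sub]
    rw [bexp_degree hc hg (by omega) hd p x
      (fun k => φ k - φ k * ((offspring p d)^[j] 0) ^ k), survivalMean]
    simp only [mul_sub, mul_one]
  unfold survivors
  rw [bexp_sum, Finset.sum_congr rfl fun x _ => this x]
  simp

lemma abs_survivors_insert_sub_le (hc : G.Connected) (hd : ∀ v, (G.neighborSet v).ncard ≤ d)
    {φ : ℕ → ℝ} (h0 : ∀ k, 0 ≤ φ k) (h1 : ∀ k, φ k ≤ 1) {m : ℕ} (hm : 1 ≤ m) (e : Sym2 V)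
    (s : Finset (Sym2 V)) :
    |survivors G m φ (insert e s) - survivors G m φ s| ≤ ((d : ℝ) + 1) ^ m := by
  induction e using Sym2.ind with
  | _ u v =>
  have hmem : ∀ k l : ℕ, 0 ≤ φ k * (1 - 0 ^ l) ∧ φ k * (1 - 0 ^ l) ≤ 1 := fun k l => by
    have h2 : (0:ℝ) ≤ 1 - 0 ^ l := sub_nonneg.2 (pow_le_one₀ le_rfl zero_le_one)
    have h3 : (1:ℝ) - 0 ^ l ≤ 1 := sub_le_self _ (pow_nonneg le_rfl _)
    exact ⟨mul_nonneg (h0 k) h2, mul_le_one₀ (h1 k) h2 h3⟩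
  unfold survivors
  rw [← Finset.sum_sub_distrib]
  refine (Finset.abs_sum_le_sum_abs _ _).trans ?_
  have hb : ∀ x ∈ (Finset.univ : Finset V), |φ (front G x (insert s(u, v) s) 1).card *
      (1 - 0 ^ (front G x (insert s(u, v) s) m).card) -
      φ (front G x s 1).card * (1 - 0 ^ (front G x s m).card)| ≤
      if G.dist u x ≤ m then 1 else 0 := fun x _ => by
    split_ifs with h
    · have h2 := hmem (front G x (insert s(u, v) s) 1).card (front G x (insert s(u, v) s) m).card
      have h3 := hmem (front G x s 1).card (front G x s m).card
      rw [abs_le]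
      constructor <;> linarith [h2.1, h2.2, h3.1, h3.2]
    · rw [not_le, SimpleGraph.dist_comm] at h
      rw [front_insert_of_dist_gt h hm, front_insert_of_dist_gt h le_rfl, sub_self, abs_zero]
  refine (Finset.sum_le_sum hb).trans ?_
  rw [Finset.sum_boole]
  exact_mod_cast card_ball_le hc hd u m

lemma card_edgeFinset'_le (hd : ∀ v, (G.neighborSet v).ncard ≤ d) :
    (edgeFinset' G).card ≤ Fintype.card V * d := by
  have : edgeFinset' G ⊆ Finset.univ.biUnion
      fun v => (G.neighborSet v).toFinset.image fun w => s(v, w) := by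
    intro e he
    induction e using Sym2.ind with
    | _ v w =>
    have := mem_edgeFinset'.1 he
    simp only [Finset.mem_biUnion, Finset.mem_univ, true_and, Finset.mem_image, Set.mem_toFinset]
    exact ⟨v, w, this, rfl⟩
  refine (Finset.card_le_card this).trans ?_
  rw [← Finset.card_univ]
  refine Finset.card_biUnion_le_card_mul _ _ _ fun v _ => Finset.card_image_le.trans ?_
  rw [← Set.ncard_eq_toFinset_card']
  exact hd v

/-- Concentration of the number of survivors around its tree limit. -/
lemma survivors_tail (hc : G.Connected) (hg : CyclesGE G g)
    (hd : ∀ v, (G.neighborSet v).ncard = d) (hd1 : 1 ≤ d) {p : ℝ} (hp : 0 ≤ p) (hp1 : p ≤ 1)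
    {φ : ℕ → ℝ} (h0 : ∀ k, 0 ≤ φ k) (h1 : ∀ k, φ k ≤ 1) {j : ℕ} (hj : 2 * j + 2 < g) {η : ℝ}
    (hη : 0 < η) (hη1 : η ≤ 1) :
    bexp p (edgeFinset' G) (fun s => if η * Fintype.card V ≤
        |survivors G (j + 1) φ s - Fintype.card V * survivalMean p d j φ| then 1 else 0) ≤
      2 * Real.exp (-(η ^ 2 / (4 * (((d : ℝ) + 1) ^ (j + 1)) ^ 2 * d)) * Fintype.card V) := by
  rw [← bexp_survivors hc hg hd p φ hj]
  refine bexp_tail hp hp1 ?_ hη hη1 (by exact_mod_cast hd1) ?_ fun e _ s _ =>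
    abs_survivors_insert_sub_le hc (fun v => (hd v).le) h0 h1 (by omega) e s
  · exact one_le_pow₀ (by linarith [(Nat.cast_nonneg d : (0:ℝ) ≤ d)])
  · have := card_edgeFinset'_le fun v => (hd v).le
    rw [mul_comm] at this
    exact_mod_cast this

end LocalLimit

section Connectors

variable {G : SimpleGraph V} {b : ℝ} {d : ℕ}

lemma cutCard_compl (S : Finset V) : cutCard G Sᶜ = cutCard G S := by
  unfold cutCard
  congr 1
  refine Finset.filter_congr fun e _ => ?_
  simp only [Finset.mem_compl, not_not]
  constructor <;> rintro ⟨x, hx, y, hy, rfl⟩ <;> exact ⟨y, hy, x, hx, Sym2.eq_swap⟩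

lemma le_cutCard (hb : 0 < b) (hG : IsExpander G b d) {S : Finset V} {N : ℝ}
    (h1 : N ≤ S.card) (h2 : N ≤ Sᶜ.card) : b * N ≤ cutCard G S := by
  have hadd : (S.card : ℝ) + Sᶜ.card = Fintype.card V := by
    exact_mod_cast Finset.card_add_card_compl S
  by_cases h : (S.card : ℝ) ≤ Fintype.card V / 2
  · exact (mul_le_mul_of_nonneg_left h1 hb.le).trans (hG.2 S h)
  · rw [← cutCard_compl]
    exact (mul_le_mul_of_nonneg_left h2 hb.le).trans (hG.2 Sᶜ (by linarith))

lemma IsExpander.connected [Nonempty V] (hb : 0 < b) (hG : IsExpander G b d) : G.Connected := by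
  rw [SimpleGraph.connected_iff]
  refine ⟨fun u v => ?_, inferInstance⟩
  by_contra huv
  set S := compVerts G (G.connectedComponentMk u) with hS
  have h1 : (1:ℝ) ≤ S.card := by
    exact_mod_cast Finset.card_pos.2 ⟨u, by simp [hS, compVerts]⟩
  have h2 : (1:ℝ) ≤ Sᶜ.card := by
    exact_mod_cast Finset.card_pos.2 ⟨v, by simpa [hS, compVerts] using fun h => huv h.symm⟩
  have h3 := le_cutCard hb hG h1 h2
  have h4 : cutCard G S = 0 := by
    rw [cutCard, Finset.card_eq_zero, Finset.filter_eq_empty_iff]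
    rintro e he ⟨x, hx, y, hy, rfl⟩
    have hadj : G.Adj x y := mem_edgeFinset'.1 he
    simp only [hS, compVerts, Finset.mem_filter, Finset.mem_univ, true_and,
      SimpleGraph.ConnectedComponent.eq] at hx hy
    exact hy (hadj.symm.reachable.trans hx)
  rw [h4] at h3
  norm_num at h3
  linarith

/-- The vertices that are joined to `A` by at most `i` edges of `F`. -/
def thicken (F : Finset (Sym2 V)) (A : Finset V) : ℕ → Finset V
  | 0 => A
  | i + 1 => thicken F A i ∪ Finset.univ.filter fun w => ∃ v ∈ thicken F A i, s(v, w) ∈ F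

lemma thicken_mono {F : Finset (Sym2 V)} {A : Finset V} {i j : ℕ} (h : i ≤ j) :
    thicken F A i ⊆ thicken F A j := by
  induction j, h using Nat.le_induction with
  | base => exact subset_rfl
  | succ j _ ih => exact ih.trans Finset.subset_union_left

lemma exists_connector_of_mem_thicken {F : Finset (Sym2 V)} {A : Finset V} {i : ℕ} {v : V}
    (h : v ∈ thicken F A i) : ∃ Q ⊆ F, Q.card ≤ i ∧
      ∃ a ∈ A, (SimpleGraph.fromEdgeSet (Q : Set (Sym2 V))).Reachable a v := by
  induction i generalizing v with
  | zero => exact ⟨∅, by simp, by simp, v, h, SimpleGraph.Reachable.refl _⟩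
  | succ i ih =>
    rw [thicken, Finset.mem_union, Finset.mem_filter] at h
    rcases h with h | ⟨-, u, hu, huv⟩
    · obtain ⟨Q, hQ, hc, h⟩ := ih h
      exact ⟨Q, hQ, by omega, h⟩
    · obtain ⟨Q, hQ, hc, a, ha, har⟩ := ih hu
      refine ⟨insert s(u, v) Q, Finset.insert_subset huv hQ,
        (Finset.card_insert_le _ _).trans (by omega), a, ha, ?_⟩
      have hmono : SimpleGraph.fromEdgeSet (Q : Set (Sym2 V)) ≤
          SimpleGraph.fromEdgeSet ((insert s(u, v) Q : Finset (Sym2 V)) : Set (Sym2 V)) :=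
        SimpleGraph.fromEdgeSet_mono (by simp)
      refine (har.mono hmono).trans ?_
      by_cases huv' : u = v
      · rw [huv']
      · exact SimpleGraph.Adj.reachable ((SimpleGraph.fromEdgeSet_adj _).2 ⟨by simp, huv'⟩)

/-- `Q` contains a path from `A` to `B`. -/
def Connects (Q : Finset (Sym2 V)) (A B : Finset V) : Prop :=
  ∃ a ∈ A, ∃ c ∈ B, (SimpleGraph.fromEdgeSet (Q : Set (Sym2 V))).Reachable a c

lemma Connects.mono {Q Q' : Finset (Sym2 V)} {A B : Finset V} (h : Connects Q A B)
    (hQ : Q ⊆ Q') : Connects Q' A B := by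
  obtain ⟨a, ha, c, hc, hr⟩ := h
  exact ⟨a, ha, c, hc, hr.mono (SimpleGraph.fromEdgeSet_mono (by exact_mod_cast hQ))⟩

/-- If `F` misses few edges of an expander then large sets `A`, `B` are joined by a short path
in `F`. -/
lemma exists_short_connector (hb : 0 < b) (hG : IsExpander G b d) {η : ℝ} {L : ℕ}
    (hL : 2 * d < L * (b * η)) {A B : Finset V} (hA : η * Fintype.card V ≤ A.card)
    (hB : η * Fintype.card V ≤ B.card) {F : Finset (Sym2 V)} (hF : F ⊆ edgeFinset' G)
    (hV : 0 < Fintype.card V)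
    (hcard : ((edgeFinset' G \ F).card : ℝ) ≤ b * η / 2 * Fintype.card V) :
    ∃ Q ⊆ F, Q.card ≤ L ∧ Connects Q A B := by
  by_contra! hno
  have hdisj : ∀ i ≤ L, Disjoint (thicken F A i) B := fun i hi => by
    rw [Finset.disjoint_left]
    intro v hv hvB
    obtain ⟨Q, hQ, hQc, a, ha, hr⟩ := exists_connector_of_mem_thicken hv
    exact hno Q hQ (hQc.trans hi) ⟨a, ha, v, hvB, hr⟩
  set X : ℕ → Finset (Sym2 V) := fun i =>
    F.filter (fun e => ∃ x ∈ thicken F A i, ∃ y, y ∉ thicken F A i ∧ e = s(x, y)) with hX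
  have hXcard : ∀ i ≤ L, b * η / 2 * Fintype.card V ≤ (X i).card := fun i hi => by
    have h1 : b * (η * Fintype.card V) ≤ cutCard G (thicken F A i) := by
      refine le_cutCard hb hG (hA.trans ?_) (hB.trans ?_)
      · exact_mod_cast Finset.card_le_card (thicken_mono (Nat.zero_le i))
      · exact_mod_cast Finset.card_le_card (Finset.subset_compl_iff_disjoint_left.2 (hdisj i hi))
    have h2 : cutCard G (thicken F A i) ≤ (X i).card + (edgeFinset' G \ F).card := by
      refine le_trans (Finset.card_le_card fun e he => ?_) (Finset.card_union_le _ _)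
      simp only [hX, Finset.mem_filter, Finset.mem_union, Finset.mem_sdiff] at he ⊢
      by_cases heF : e ∈ F
      · exact Or.inl ⟨heF, he.2⟩
      · exact Or.inr ⟨he.1, heF⟩
    have h3 : (cutCard G (thicken F A i) : ℝ) ≤ (X i).card + (edgeFinset' G \ F).card := by
      exact_mod_cast h2
    linarith
  have hXd : Set.PairwiseDisjoint (Finset.range L : Set ℕ) X := by
    have key : ∀ i j, i < j → Disjoint (X i) (X j) := fun i j hij => by
      rw [Finset.disjoint_left]
      intro e he he'
      simp only [hX, Finset.mem_filter] at he he'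
      obtain ⟨heF, x, hx, y, -, rfl⟩ := he
      obtain ⟨-, x', hx', y', hy', he⟩ := he'
      have hy : y ∈ thicken F A (i + 1) := by
        rw [thicken, Finset.mem_union, Finset.mem_filter]
        exact Or.inr ⟨Finset.mem_univ _, x, hx, heF⟩
      rcases Sym2.eq_iff.1 he with ⟨-, rfl⟩ | ⟨rfl, -⟩
      · exact hy' (thicken_mono hij hy)
      · exact hy' (thicken_mono hij.le hx)
    intro i _ j _ hij
    rcases lt_or_gt_of_ne hij with h | h
    · exact key i j h
    · exact (key j i h).symm
  have h1 : ((Finset.range L).biUnion X).card ≤ Fintype.card V * d := by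
    refine (Finset.card_le_card ?_).trans (card_edgeFinset'_le hG.1)
    exact Finset.biUnion_subset.2 fun i _ => (Finset.filter_subset _ _).trans hF
  rw [Finset.card_biUnion hXd] at h1
  have h2 : (L : ℝ) * (b * η / 2 * Fintype.card V) ≤ ∑ i ∈ Finset.range L, ((X i).card : ℝ) := by
    have := Finset.card_nsmul_le_sum (Finset.range L) (fun i => ((X i).card : ℝ)) _
      fun i hi => hXcard i (Finset.mem_range.1 hi).le
    simpa using this
  have h3 : ∑ i ∈ Finset.range L, ((X i).card : ℝ) ≤ Fintype.card V * d := by exact_mod_cast h1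
  have hV' : (0:ℝ) < Fintype.card V := by exact_mod_cast hV
  nlinarith

/-- Two large sets of an expander are joined by linearly many disjoint short paths. -/
lemma exists_disjoint_connectors (hb : 0 < b) (hG : IsExpander G b d) {η : ℝ} {L : ℕ}
    (hL0 : 0 < L) (hL : 2 * d < L * (b * η)) {A B : Finset V} (hAB : Disjoint A B)
    (hA : η * Fintype.card V ≤ A.card) (hB : η * Fintype.card V ≤ B.card) :
    ∃ 𝒬 : Finset (Finset (Sym2 V)), (𝒬 : Set (Finset (Sym2 V))).PairwiseDisjoint id ∧
      (∀ Q ∈ 𝒬, Q ⊆ edgeFinset' G ∧ Q.card ≤ L ∧ Connects Q A B) ∧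
      b * η / (2 * L) * Fintype.card V ≤ 𝒬.card := by
  obtain ⟨𝒬, hmem, hmax⟩ := Finset.exists_max_image
    (Finset.univ.filter fun 𝒬 : Finset (Finset (Sym2 V)) =>
      (𝒬 : Set (Finset (Sym2 V))).PairwiseDisjoint id ∧
        ∀ Q ∈ 𝒬, Q ⊆ edgeFinset' G ∧ Q.card ≤ L ∧ Connects Q A B) Finset.card
    ⟨∅, by simp⟩
  simp only [Finset.mem_filter, Finset.mem_univ, true_and] at hmem hmax
  refine ⟨𝒬, hmem.1, hmem.2, ?_⟩
  by_contra! hlt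
  have hL' : (0:ℝ) < L := by exact_mod_cast hL0
  have hV : 0 < Fintype.card V := by
    by_contra! h0
    rw [Nat.le_zero.1 h0] at hlt
    simp only [Nat.cast_zero, mul_zero] at hlt
    exact absurd hlt (not_lt.2 (Nat.cast_nonneg _))
  set F := edgeFinset' G \ 𝒬.biUnion id with hF
  have hcard : ((edgeFinset' G \ F).card : ℝ) ≤ b * η / 2 * Fintype.card V := by
    have h1 : (edgeFinset' G \ F).card ≤ 𝒬.card * L := by
      refine le_trans (Finset.card_le_card ?_)
        (Finset.card_biUnion_le_card_mul 𝒬 id L fun Q hQ => (hmem.2 Q hQ).2.1)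
      intro e he
      simp only [hF, Finset.mem_sdiff, not_and, not_not] at he
      exact he.2 he.1
    have h2 : ((edgeFinset' G \ F).card : ℝ) ≤ 𝒬.card * L := by exact_mod_cast h1
    have h3 := mul_le_mul_of_nonneg_right hlt.le hL'.le
    have h4 : b * η / (2 * L) * Fintype.card V * L = b * η / 2 * Fintype.card V := by
      field_simp
    linarith
  obtain ⟨Q, hQF, hQL, hQ⟩ :=
    exists_short_connector hb hG hL hA hB Finset.sdiff_subset hV hcard
  have hQd : ∀ Q' ∈ 𝒬, Disjoint Q Q' := fun Q' hQ' =>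
    Finset.disjoint_of_subset_left hQF (Finset.sdiff_disjoint.mono_right
      (Finset.subset_biUnion_of_mem id hQ'))
  have hQne : Q ∉ 𝒬 := fun h => by
    have hemp : Q = ∅ := Finset.disjoint_self_iff_empty _ |>.1 (hQd Q h)
    obtain ⟨a, ha, c, hc, hr⟩ := hQ
    rw [hemp] at hr
    simp only [Finset.coe_empty, SimpleGraph.fromEdgeSet_empty, SimpleGraph.reachable_bot] at hr
    exact Finset.disjoint_left.1 hAB ha (hr ▸ hc)
  have := hmax (insert Q 𝒬) ⟨?_, ?_⟩
  · rw [Finset.card_insert_of_notMem hQne] at this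
    omega
  · rw [Finset.coe_insert]
    exact hmem.1.insert fun Q' hQ' _ => hQd Q' hQ'
  · intro Q' hQ'
    rcases Finset.mem_insert.1 hQ' with rfl | h
    · exact ⟨hQF.trans Finset.sdiff_subset, hQL, hQ⟩
    · exact hmem.2 Q' h

lemma bexp_not_connects_le (hb : 0 < b) (hG : IsExpander G b d) {p η : ℝ} (hp : 0 ≤ p)
    (hp1 : p ≤ 1) {L : ℕ}
    (hL0 : 0 < L) (hL : 2 * d < L * (b * η)) {A B : Finset V} (hAB : Disjoint A B)
    (hA : η * Fintype.card V ≤ A.card) (hB : η * Fintype.card V ≤ B.card) :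
    bexp p (edgeFinset' G) (fun t => if Connects t A B then 0 else 1) ≤
      Real.exp (-(p ^ L * (b * η / (2 * L))) * Fintype.card V) := by
  obtain ⟨𝒬, hd, hQ, hcard⟩ := exists_disjoint_connectors hb hG hL0 hL hAB hA hB
  have hpL : 0 ≤ 1 - p ^ L := sub_nonneg.2 (pow_le_one₀ hp hp1)
  have h1 := bexp_avoid_le hp hp1 𝒬 hd (fun Q h => (hQ Q h).1) fun Q h => (hQ Q h).2.1
  refine (bexp_mono hp hp1 fun t _ => ?_).trans (h1.trans ?_)
  · by_cases h : Connects t A B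
    · rw [if_pos h]; split_ifs <;> norm_num
    · rw [if_neg h, if_pos fun Q hQ𝒬 hQt => h ((hQ Q hQ𝒬).2.2.mono hQt)]
  calc (1 - p ^ L) ^ 𝒬.card ≤ Real.exp (-p ^ L) ^ 𝒬.card := by
        refine pow_le_pow_left₀ hpL ?_ _
        linarith [Real.add_one_le_exp (-p ^ L)]
    _ = Real.exp (-(p ^ L * 𝒬.card)) := by rw [← Real.exp_nat_mul]; congr 1; ring
    _ ≤ _ := by
        apply Real.exp_le_exp.2
        have := mul_le_mul_of_nonneg_left hcard (pow_nonneg hp L)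
        linarith

end Connectors

section Sprinkling

lemma exists_large_fiber {β : Type} [DecidableEq β] (f : V → β) {U : Finset V} {N : ℝ} (hN : 0 < N)
    (hU : N ≤ U.card)
    (h : ∀ S : Finset β, N ≤ (U.filter (f · ∈ S)).card → (U.filter (f · ∉ S)).card < N) :
    ∃ c, U.card - 2 * N ≤ (U.filter (f · = c)).card := by
  obtain ⟨S, hS, hmin⟩ := Finset.exists_min_image
    ((U.image f).powerset.filter fun S => N ≤ (U.filter (f · ∈ S)).card) Finset.card
    ⟨U.image f, by
      rw [Finset.mem_filter, Finset.filter_true_of_mem fun v hv => Finset.mem_image_of_mem f hv]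
      exact ⟨Finset.mem_powerset_self _, hU⟩⟩
  simp only [Finset.mem_filter, Finset.mem_powerset] at hS hmin
  obtain ⟨c, hc⟩ : S.Nonempty := by
    rw [Finset.nonempty_iff_ne_empty]
    rintro rfl
    have := hS.2
    simp only [Finset.notMem_empty, Finset.filter_false, Finset.card_empty, Nat.cast_zero] at this
    linarith
  refine ⟨c, ?_⟩
  have h1 : ((U.filter (f · ∈ S.erase c)).card : ℝ) < N := by
    by_contra! hle
    have := hmin (S.erase c) ⟨(Finset.erase_subset _ _).trans hS.1, hle⟩
    exact absurd this (not_le.2 (Finset.card_erase_lt_of_mem hc))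
  have h2 := h S hS.2
  have h3 : U.card ≤ (U.filter (f · ∉ S)).card + (U.filter (f · ∈ S.erase c)).card +
      (U.filter (f · = c)).card := by
    refine le_trans (Finset.card_le_card fun v hv => ?_)
      ((Finset.card_union_le _ _).trans (Nat.add_le_add_right (Finset.card_union_le _ _) _))
    simp only [Finset.mem_union, Finset.mem_filter, Finset.mem_erase, hv, true_and]
    tauto
  have h4 : (U.card : ℝ) ≤ (U.filter (f · ∉ S)).card + (U.filter (f · ∈ S.erase c)).card +
      (U.filter (f · = c)).card := by exact_mod_cast h3
  linarith

/-- The vertices of `H` whose connected component has at least `K` vertices. -/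
def bigVerts (H : SimpleGraph V) (K : ℕ) : Finset V :=
  Finset.univ.filter fun v => K ≤ (compVerts H (H.connectedComponentMk v)).card

lemma mul_card_image_bigVerts_le (H : SimpleGraph V) (K : ℕ) :
    K * ((bigVerts H K).image H.connectedComponentMk).card ≤ Fintype.card V := by
  refine (Finset.mul_card_image_le_card _ _ fun c hc => ?_).trans
    (Finset.card_le_univ (bigVerts H K))
  obtain ⟨v, hv, rfl⟩ := Finset.mem_image.1 hc
  have hv' := (Finset.mem_filter.1 hv).2
  refine hv'.trans (Finset.card_le_card fun w hw => ?_)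
  have hw' := (Finset.mem_filter.1 hw).2
  simp only [Finset.mem_filter, bigVerts, Finset.mem_univ, true_and]
  exact ⟨by rwa [hw'], hw'⟩

variable {G : SimpleGraph V} {b : ℝ} {d : ℕ}

lemma exists_large_comp [Nonempty V] {s t : Finset (Sym2 V)} {U : Finset V} {N : ℝ} (hN : 0 < N)
    (h : ∀ 𝒮 ⊆ U.image (SimpleGraph.fromEdgeSet (s : Set (Sym2 V))).connectedComponentMk,
      N ≤ (U.filter
        ((SimpleGraph.fromEdgeSet (s : Set (Sym2 V))).connectedComponentMk · ∈ 𝒮)).card →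
      N ≤ (U.filter
        ((SimpleGraph.fromEdgeSet (s : Set (Sym2 V))).connectedComponentMk · ∉ 𝒮)).card →
      Connects t
        (U.filter ((SimpleGraph.fromEdgeSet (s : Set (Sym2 V))).connectedComponentMk · ∈ 𝒮))
        (U.filter ((SimpleGraph.fromEdgeSet (s : Set (Sym2 V))).connectedComponentMk · ∉ 𝒮))) :
    ∃ c, U.card - 2 * N ≤
      (compVerts (SimpleGraph.fromEdgeSet ((s ∪ t : Finset (Sym2 V)) : Set (Sym2 V))) c).card := by
  set H := SimpleGraph.fromEdgeSet ((s ∪ t : Finset (Sym2 V)) : Set (Sym2 V)) with hH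
  set H₁ := SimpleGraph.fromEdgeSet (s : Set (Sym2 V)) with hH₁
  have hs : H₁ ≤ H := SimpleGraph.fromEdgeSet_mono (by simp)
  have ht : SimpleGraph.fromEdgeSet (t : Set (Sym2 V)) ≤ H :=
    SimpleGraph.fromEdgeSet_mono (by simp)
  by_cases hU : N ≤ U.card
  · obtain ⟨c, hc⟩ := exists_large_fiber H.connectedComponentMk hN hU fun 𝒮 hA => by
      by_contra! hB
      set 𝒮₁ := (U.filter (H.connectedComponentMk · ∈ 𝒮)).image H₁.connectedComponentMk
      have hiff : ∀ v ∈ U, H₁.connectedComponentMk v ∈ 𝒮₁ ↔ H.connectedComponentMk v ∈ 𝒮 := by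
        intro v hv
        refine ⟨fun hm => ?_, fun hm => Finset.mem_image_of_mem _ (Finset.mem_filter.2 ⟨hv, hm⟩)⟩
        obtain ⟨u, hu, huv⟩ := Finset.mem_image.1 hm
        have := (Finset.mem_filter.1 hu).2
        rwa [SimpleGraph.ConnectedComponent.eq.2
          ((SimpleGraph.ConnectedComponent.eq.1 huv).mono hs)] at this
      have h1 := Finset.filter_congr hiff
      have h2 := Finset.filter_congr fun v hv => not_congr (hiff v hv)
      have h3 := h 𝒮₁ (Finset.image_subset_image (Finset.filter_subset _ _))
      rw [h1, h2] at h3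
      obtain ⟨a, ha, c, hc, hr⟩ := h3 hA hB
      have := SimpleGraph.ConnectedComponent.eq.2 (hr.mono ht)
      exact (Finset.mem_filter.1 hc).2 (this ▸ (Finset.mem_filter.1 ha).2)
    refine ⟨c, hc.trans ?_⟩
    exact_mod_cast Finset.card_le_card (Finset.filter_subset_filter _ (Finset.subset_univ U))
  · refine ⟨H.connectedComponentMk (Classical.arbitrary V), ?_⟩
    have : (0:ℝ) ≤ (compVerts H (H.connectedComponentMk (Classical.arbitrary V))).card :=
      Nat.cast_nonneg _
    linarith

/-- Sprinkling: adding independent edges of an expander joins most of the vertices lying in big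
components into one component. -/
lemma bexp_no_large_comp_le [Nonempty V] (hb : 0 < b) (hG : IsExpander G b d) {p η : ℝ}
    (hp : 0 ≤ p) (hp1 : p ≤ 1) (hη : 0 < η) {L K : ℕ} (hL0 : 0 < L) (hL : 2 * d < L * (b * η))
    (hK : 0 < K) (s : Finset (Sym2 V)) :
    bexp p (edgeFinset' G) (fun t =>
      if ∃ c, ((bigVerts (SimpleGraph.fromEdgeSet (s : Set (Sym2 V))) K).card : ℝ) -
          2 * (η * Fintype.card V) ≤
        (compVerts (SimpleGraph.fromEdgeSet ((s ∪ t : Finset (Sym2 V)) : Set (Sym2 V))) c).card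
      then 0 else 1) ≤
      Real.exp ((1 / K - p ^ L * (b * η / (2 * L))) * Fintype.card V) := by
  set H₁ := SimpleGraph.fromEdgeSet (s : Set (Sym2 V)) with hH₁
  set U := bigVerts H₁ K with hU
  set 𝒞 := U.image H₁.connectedComponentMk with h𝒞
  set N := η * Fintype.card V with hN
  have hN0 : 0 < N := mul_pos hη (by exact_mod_cast Fintype.card_pos)
  set A : Finset H₁.ConnectedComponent → Finset V :=
    fun 𝒮 => U.filter (H₁.connectedComponentMk · ∈ 𝒮) with hA
  set B : Finset H₁.ConnectedComponent → Finset V :=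
    fun 𝒮 => U.filter (H₁.connectedComponentMk · ∉ 𝒮) with hB
  set x := Real.exp (-(p ^ L * (b * η / (2 * L))) * Fintype.card V) with hx
  set g : Finset H₁.ConnectedComponent → Finset (Sym2 V) → ℝ := fun 𝒮 t =>
    if N ≤ (A 𝒮).card ∧ N ≤ (B 𝒮).card then (if Connects t (A 𝒮) (B 𝒮) then 0 else 1) else 0
    with hg
  have hg0 : ∀ 𝒮 t, 0 ≤ g 𝒮 t := fun 𝒮 t => by
    simp only [hg]; split_ifs <;> norm_num
  have hgx : ∀ 𝒮, bexp p (edgeFinset' G) (g 𝒮) ≤ x := fun 𝒮 => by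
    by_cases h : N ≤ (A 𝒮).card ∧ N ≤ (B 𝒮).card
    · simp only [hg, if_pos h]
      exact bexp_not_connects_le hb hG hp hp1 hL0 hL
        (Finset.disjoint_filter_filter_not _ _ _) h.1 h.2
    · simp only [hg, if_neg h]
      rw [bexp_const]
      exact (Real.exp_pos _).le
  have h1 : bexp p (edgeFinset' G) (fun t => if ∃ c, (U.card : ℝ) - 2 * N ≤
      (compVerts (SimpleGraph.fromEdgeSet ((s ∪ t : Finset (Sym2 V)) : Set (Sym2 V))) c).card
      then 0 else 1) ≤ bexp p (edgeFinset' G) (fun t => ∑ 𝒮 ∈ 𝒞.powerset, g 𝒮 t) := by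
    refine bexp_mono hp hp1 fun t _ => ?_
    split_ifs with hc
    · exact Finset.sum_nonneg fun 𝒮 _ => hg0 𝒮 t
    · by_contra! hlt
      refine hc (exists_large_comp hN0 fun 𝒮 h𝒮 hA' hB' => ?_)
      by_contra hcon
      have h2 := Finset.single_le_sum (f := fun 𝒮 => g 𝒮 t) (fun 𝒮 _ => hg0 𝒮 t)
        (Finset.mem_powerset.2 h𝒮)
      have h3 : g 𝒮 t = 1 := by
        simp only [hg]
        rw [if_pos ⟨hA', hB'⟩, if_neg hcon]
      simp only [h3] at h2
      linarith
  refine h1.trans ?_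
  rw [bexp_sum]
  refine (Finset.sum_le_sum fun 𝒮 _ => hgx 𝒮).trans ?_
  rw [Finset.sum_const, Finset.card_powerset, nsmul_eq_mul]
  have h4 : ((2 ^ 𝒞.card : ℕ) : ℝ) ≤ Real.exp (1 / K * Fintype.card V) := by
    have h5 : (2:ℝ) ^ 𝒞.card ≤ Real.exp 1 ^ 𝒞.card :=
      pow_le_pow_left₀ (by norm_num) (by linarith [Real.add_one_le_exp (1:ℝ)]) _
    push_cast
    refine h5.trans ?_
    rw [← Real.exp_nat_mul]
    apply Real.exp_le_exp.2
    have h6 : (K : ℝ) * 𝒞.card ≤ Fintype.card V := by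
      exact_mod_cast mul_card_image_bigVerts_le H₁ K
    have hK' : (0:ℝ) < K := by exact_mod_cast hK
    rw [one_div, inv_mul_eq_div, mul_one, le_div_iff₀ hK']
    linarith
  calc _ ≤ Real.exp (1 / K * Fintype.card V) * x :=
        mul_le_mul_of_nonneg_right h4 (Real.exp_pos _).le
    _ = _ := by rw [hx, ← Real.exp_add]; congr 1; ring

end Sprinkling

section Offspring

open Filter Topology

variable {p : ℝ} {d : ℕ}

lemma offspring_mono (hp : 0 ≤ p) (hp1 : p ≤ 1) {x y : ℝ} (hx : 0 ≤ x) (hxy : x ≤ y) :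
    offspring p d x ≤ offspring p d y :=
  pow_le_pow_left₀ (by nlinarith) (by nlinarith) _

lemma offspring_nonneg (hp : 0 ≤ p) (hp1 : p ≤ 1) {x : ℝ} (hx : 0 ≤ x) :
    0 ≤ offspring p d x :=
  pow_nonneg (by nlinarith) _

lemma offspring_iterate_nonneg (hp : 0 ≤ p) (hp1 : p ≤ 1) (j : ℕ) :
    0 ≤ (offspring p d)^[j] 0 := by
  cases j with
  | zero => exact le_rfl
  | succ j =>
    induction j with
    | zero => exact offspring_nonneg hp hp1 le_rfl
    | succ j ih => rw [Function.iterate_succ_apply']; exact offspring_nonneg hp hp1 ih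

lemma offspring_iterate_le (hp : 0 ≤ p) (hp1 : p ≤ 1) {x : ℝ} (hx : 0 ≤ x)
    (h : offspring p d x ≤ x) (j : ℕ) : (offspring p d)^[j] 0 ≤ x := by
  induction j with
  | zero => exact hx
  | succ j ih =>
    rw [Function.iterate_succ_apply']
    exact (offspring_mono hp hp1 (offspring_iterate_nonneg hp hp1 j) ih).trans h

lemma offspring_iterate_monotone (hp : 0 ≤ p) (hp1 : p ≤ 1) :
    Monotone fun j => (offspring p d)^[j] 0 := by
  refine monotone_nat_of_le_succ fun j => ?_
  induction j with
  | zero => exact offspring_nonneg hp hp1 le_rfl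
  | succ j ih =>
    rw [Function.iterate_succ_apply', Function.iterate_succ_apply' _ (j + 1)]
    exact offspring_mono hp hp1 (offspring_iterate_nonneg hp hp1 j) ih

lemma offspring_lt_self (hd : 3 ≤ d) (hp : 0 < p) (hp1 : p ≤ 1) {q r : ℝ} (hq0 : 0 ≤ q)
    (hq : offspring p d q = q) (hqr : q < r) (hr : r < 1) : offspring p d r < r := by
  have hq1 : 0 < 1 - q := by linarith
  have hx : 1 - p + p * q ∈ Set.Ici (0:ℝ) := by simp only [Set.mem_Ici]; nlinarith
  have hne : 1 - p + p * q ≠ 1 := ne_of_lt (by nlinarith)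
  have hsum : (1 - r) / (1 - q) + (r - q) / (1 - q) = 1 := by field_simp; ring
  have h := (strictConvexOn_pow (show 2 ≤ d - 1 by omega)).2 hx (Set.mem_Ici.2 zero_le_one) hne
    (div_pos (sub_pos.2 hr) hq1) (div_pos (sub_pos.2 hqr) hq1) hsum
  simp only [smul_eq_mul, one_pow, mul_one] at h
  have e1 : (1 - r) / (1 - q) * (1 - p + p * q) + (r - q) / (1 - q) = 1 - p + p * r := by
    field_simp; ring
  have e2 : (1 - p + p * q) ^ (d - 1) = q := hq
  have e3 : (1 - r) / (1 - q) * q + (r - q) / (1 - q) = r := by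
    field_simp; ring
  rw [e1, e2, e3] at h
  exact h

lemma tendsto_offspring_iterate (hd : 3 ≤ d) (hp : 0 < p) (hp1 : p ≤ 1) {q : ℝ} (hq0 : 0 ≤ q)
    (hq1 : q < 1) (hq : offspring p d q = q) :
    Tendsto (fun j => (offspring p d)^[j] 0) atTop (𝓝 q) := by
  have hbdd : ∀ j, (offspring p d)^[j] 0 ≤ q := offspring_iterate_le hp.le hp1 hq0 hq.le
  have hlim := tendsto_atTop_ciSup (offspring_iterate_monotone (d := d) hp.le hp1)
    ⟨q, by rintro _ ⟨j, rfl⟩; exact hbdd j⟩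
  set l := ⨆ j, (offspring p d)^[j] 0 with hl
  have hcont : Continuous (offspring p d) := by unfold offspring; fun_prop
  have hfix : offspring p d l = l := isFixedPt_of_tendsto_iterate hlim hcont.continuousAt
  have hlq : l ≤ q := ciSup_le hbdd
  have hl0 : 0 ≤ l := ge_of_tendsto' hlim fun j => offspring_iterate_nonneg hp.le hp1 j
  rcases hlq.eq_or_lt with h | h
  · rwa [h] at hlim
  · exact absurd (offspring_lt_self hd hp hp1 hl0 hfix h hq1) (by rw [hq]; exact lt_irrefl _)

lemma survivalMean_one (p : ℝ) (d j : ℕ) :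
    survivalMean p d j ((Set.univ : Set ℕ).indicator 1) =
      1 - (1 - p + p * (offspring p d)^[j] 0) ^ d := by
  have h1 := add_pow p (1 - p) d
  have h2 := add_pow (p * (offspring p d)^[j] 0) (1 - p) d
  rw [add_sub_cancel, one_pow] at h1
  rw [add_comm (1 - p), h2]
  refine Eq.trans ?_ (congrArg (· - _) h1.symm)
  rw [survivalMean, ← Finset.sum_sub_distrib]
  refine Finset.sum_congr rfl fun k _ => ?_
  rw [mul_pow, Set.indicator_univ, Pi.one_apply]
  ring

lemma survivalMean_indicator (p : ℝ) (d j : ℕ) {k : ℕ} (hk : k ≤ d) :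
    survivalMean p d j (({k} : Set ℕ).indicator 1) =
      d.choose k * p ^ k * (1 - p) ^ (d - k) * (1 - ((offspring p d)^[j] 0) ^ k) := by
  rw [survivalMean, Finset.sum_eq_single k]
  · simp; ring
  · intro i _ hi; simp [hi]
  · intro h; exact absurd (Finset.mem_range.2 (by omega)) h

/-- Slightly below `p` the survival probability is almost that at `p`, at all depths. -/
lemma exists_survivalMean_ge (hd : 3 ≤ d) (hp : 0 < p) (hp1 : p < 1) {q : ℝ} (hq0 : 0 ≤ q)
    (hq1 : q < 1) (hq : offspring p d q = q) {η : ℝ} (hη : 0 < η) :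
    ∃ p₁, 0 < p₁ ∧ p₁ < p ∧
      ∀ j, 1 - (1 - p + p * q) ^ d - η ≤ survivalMean p₁ d j ((Set.univ : Set ℕ).indicator 1) := by
  obtain ⟨r, hr, hqr, hr1⟩ : ∃ r, 1 - (1 - p + p * q) ^ d - η < 1 - (1 - p + p * r) ^ d ∧
      q < r ∧ r < 1 := by
    have hc : Tendsto (fun r : ℝ => 1 - (1 - p + p * r) ^ d) (𝓝[>] q)
        (𝓝 (1 - (1 - p + p * q) ^ d)) :=
      (Continuous.tendsto (by fun_prop) q).mono_left nhdsWithin_le_nhds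
    have h1 := hc.eventually (lt_mem_nhds (sub_lt_self _ hη))
    exact (h1.and (Ioo_mem_nhdsGT hq1)).exists
  have hlt := offspring_lt_self hd hp hp1.le hq0 hq hqr hr1
  obtain ⟨p₁, ⟨h1, h2⟩, h3, h4⟩ : ∃ p₁, (1 - (1 - p + p * q) ^ d - η < 1 - (1 - p₁ + p₁ * r) ^ d ∧
      offspring p₁ d r < r) ∧ 0 < p₁ ∧ p₁ < p := by
    have hc : Tendsto (fun p₁ : ℝ => 1 - (1 - p₁ + p₁ * r) ^ d) (𝓝[<] p)
        (𝓝 (1 - (1 - p + p * r) ^ d)) :=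
      (Continuous.tendsto (by fun_prop) p).mono_left nhdsWithin_le_nhds
    have hc' : Tendsto (fun p₁ : ℝ => offspring p₁ d r) (𝓝[<] p) (𝓝 (offspring p d r)) :=
      (Continuous.tendsto (by unfold offspring; fun_prop) p).mono_left nhdsWithin_le_nhds
    exact (((hc.eventually (lt_mem_nhds hr)).and (hc'.eventually (gt_mem_nhds hlt))).and
      (Ioo_mem_nhdsLT hp)).exists
  refine ⟨p₁, h3, h4, fun j => ?_⟩
  rw [survivalMean_one]
  have h5 := offspring_iterate_le h3.le (h4.trans hp1).le (hq0.trans hqr.le) h2.le j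
  have h6 := offspring_iterate_nonneg (d := d) h3.le (h4.trans hp1).le j
  have h7 : (1 - p₁ + p₁ * (offspring p₁ d)^[j] 0) ^ d ≤ (1 - p₁ + p₁ * r) ^ d :=
    pow_le_pow_left₀ (by nlinarith) (by nlinarith) _
  linarith

end Offspring

section Giant

variable {G : SimpleGraph V} {g d m : ℕ} {s : Finset (Sym2 V)}

/-- The vertices joined to a vertex at distance `m` by a `G`-geodesic with all edges in `s`. -/
def survivingVerts (G : SimpleGraph V) (m : ℕ) (s : Finset (Sym2 V)) : Finset V :=
  Finset.univ.filter fun x => (front G x s m).Nonempty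

lemma survivors_indicator (A : Set ℕ) :
    survivors G m (A.indicator 1) s =
      ((survivingVerts G m s).filter fun x => (front G x s 1).card ∈ A).card := by
  rw [survivingVerts, Finset.filter_filter, Finset.card_filter, survivors, Nat.cast_sum]
  refine Finset.sum_congr rfl fun x _ => ?_
  rcases Finset.eq_empty_or_nonempty (front G x s m) with h | h
  · simp [h]
  · by_cases hA : (front G x s 1).card ∈ A <;> simp [h, h.ne_empty, hA]

lemma survivors_indicator_univ :
    survivors G m ((Set.univ : Set ℕ).indicator 1) s = (survivingVerts G m s).card := by
  rw [survivors_indicator]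
  simp only [Set.mem_univ, Finset.filter_true]

lemma survivingVerts_subset_bigVerts :
    survivingVerts G m s ⊆ bigVerts (SimpleGraph.fromEdgeSet (s : Set (Sym2 V))) (m + 1) :=
  fun _ hx => Finset.mem_filter.2 ⟨Finset.mem_univ _,
    le_card_comp_of_front_nonempty (Finset.mem_filter.1 hx).2⟩

lemma compVerts_subset_survivingVerts (hc : G.Connected) (hg : CyclesGE G g)
    (hs : s ⊆ edgeFinset' G) (hd : ∀ v, (G.neighborSet v).ncard ≤ d) (hm : 2 * m < g)
    {c : (SimpleGraph.fromEdgeSet (s : Set (Sym2 V))).ConnectedComponent}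
    (h : (d + 1) ^ m < (compVerts _ c).card) : compVerts _ c ⊆ survivingVerts G m s := by
  intro v hv
  refine Finset.mem_filter.2 ⟨Finset.mem_univ _, ?_⟩
  by_contra hne
  have := card_comp_le_of_front_eq_empty hc hg hs hd hm (Finset.not_nonempty_iff_eq_empty.1 hne)
  rw [(Finset.mem_filter.1 hv).2] at this
  omega

/-- Every largest component of `H` has about `α k * |V|` vertices of degree `k`, `1 ≤ k ≤ d`. -/
def HasDegreeDistribution (H : SimpleGraph V) (d : ℕ) (α : ℕ → ℝ) (ε : ℝ) : Prop :=
  ∀ c₁ : H.ConnectedComponent, IsLargestComp H c₁ → ∀ k : ℕ, 1 ≤ k → k ≤ d →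
    |(((compVerts H c₁).filter (fun v => (H.neighborSet v).ncard = k)).card : ℝ) /
      Fintype.card V - α k| < ε

lemma hasDegreeDistribution_of_survivors [Nonempty V] (hc : G.Connected) (hg : CyclesGE G g)
    (hs : s ⊆ edgeFinset' G) (hd : ∀ v, (G.neighborSet v).ncard ≤ d) (hm : 2 * m < g)
    {θ η ε : ℝ} {α : ℕ → ℝ} (hε : 8 * η < ε)
    (hθ : ((d : ℝ) + 1) ^ m < (θ - 4 * η) * Fintype.card V)
    (hW : survivors G m (Set.univ.indicator 1) s ≤ (θ + 2 * η) * Fintype.card V)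
    (hα : ∀ k, 1 ≤ k → k ≤ d →
      |survivors G m (({k} : Set ℕ).indicator 1) s - Fintype.card V * α k| ≤
        2 * η * Fintype.card V)
    (hbig : ∃ c, (θ - 4 * η) * Fintype.card V ≤
      (compVerts (SimpleGraph.fromEdgeSet (s : Set (Sym2 V))) c).card) :
    HasDegreeDistribution (SimpleGraph.fromEdgeSet (s : Set (Sym2 V))) d α ε := by
  set H := SimpleGraph.fromEdgeSet (s : Set (Sym2 V)) with hH
  intro c₁ hc₁ k hk1 hk
  have hV : (0:ℝ) < Fintype.card V := by exact_mod_cast Fintype.card_pos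
  set C := compVerts H c₁ with hC
  set W := survivingVerts G m s with hWdef
  have hCcard : (θ - 4 * η) * Fintype.card V ≤ C.card := by
    obtain ⟨c, hc⟩ := hbig
    exact hc.trans (by exact_mod_cast hc₁ c)
  have hCW : C ⊆ W := compVerts_subset_survivingVerts hc hg hs hd hm (by
    have := hθ.trans_le hCcard
    exact_mod_cast this)
  rw [survivors_indicator_univ] at hW
  have hα' := hα k hk1 hk
  have hdeg : survivors G m (({k} : Set ℕ).indicator 1) s =
      (W.filter fun x => (H.neighborSet x).ncard = k).card := by
    rw [survivors_indicator]
    congr 2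
    ext x
    simp [hWdef, hH, ncard_neighborSet_eq hs]
  rw [hdeg] at hα'
  have h1 : (C.filter fun x => (H.neighborSet x).ncard = k).card ≤
      (W.filter fun x => (H.neighborSet x).ncard = k).card :=
    Finset.card_le_card (Finset.filter_subset_filter _ hCW)
  have h2 : (W.filter fun x => (H.neighborSet x).ncard = k).card + C.card ≤
      (C.filter fun x => (H.neighborSet x).ncard = k).card + W.card := by
    rw [← Finset.card_sdiff_add_card_eq_card hCW, ← add_assoc]
    refine Nat.add_le_add_right (le_trans (Finset.card_le_card fun x hx => ?_)
      (Finset.card_union_le _ _)) _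
    simp only [Finset.mem_filter, Finset.mem_union, Finset.mem_sdiff] at hx ⊢
    tauto
  have h1' : ((C.filter fun x => (H.neighborSet x).ncard = k).card : ℝ) ≤
      (W.filter fun x => (H.neighborSet x).ncard = k).card := by exact_mod_cast h1
  have h2' : ((W.filter fun x => (H.neighborSet x).ncard = k).card : ℝ) + C.card ≤
      (C.filter fun x => (H.neighborSet x).ncard = k).card + W.card := by exact_mod_cast h2
  rw [abs_le] at hα'
  have hεV := mul_lt_mul_of_pos_right hε hV
  have hη : 0 ≤ η := by nlinarith
  have hηV := mul_nonneg hη hV.le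
  rw [div_sub' hV.ne', abs_div, abs_of_pos hV, div_lt_iff₀ hV, abs_lt]
  constructor <;> nlinarith

end Giant

section Assembly

variable {G : SimpleGraph V} {g d j : ℕ} {b p p₁ p₂ η ε θ : ℝ} {α : ℕ → ℝ}

/-- The indicator that `survivors` deviates from its mean by at least `η` per vertex. -/
def deviates (G : SimpleGraph V) (p : ℝ) (d j : ℕ) (η : ℝ) (A : Set ℕ) (s : Finset (Sym2 V)) : ℝ :=
  if η * Fintype.card V ≤ |survivors G (j + 1) (A.indicator 1) s -
    Fintype.card V * survivalMean p d j (A.indicator 1)| then 1 else 0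

lemma deviates_nonneg (p : ℝ) (d j : ℕ) (η : ℝ) (A : Set ℕ) (s : Finset (Sym2 V)) :
    0 ≤ deviates G p d j η A s := by
  unfold deviates; split_ifs <;> norm_num

lemma lt_of_deviates_lt_one {A : Set ℕ} {s : Finset (Sym2 V)} (h : deviates G p d j η A s < 1) :
    |survivors G (j + 1) (A.indicator 1) s -
      Fintype.card V * survivalMean p d j (A.indicator 1)| < η * Fintype.card V := by
  by_contra! hle
  rw [deviates, if_pos hle] at h
  exact lt_irrefl _ h

lemma bexp_deviates_le (hc : G.Connected) (hg : CyclesGE G g)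
    (hd : ∀ v, (G.neighborSet v).ncard = d) (hd1 : 1 ≤ d) (hp : 0 ≤ p) (hp1 : p ≤ 1)
    (hj : 2 * j + 2 < g) (hη : 0 < η) (hη1 : η ≤ 1) (A : Set ℕ) :
    bexp p (edgeFinset' G) (deviates G p d j η A) ≤
      2 * Real.exp (-(η ^ 2 / (4 * (((d : ℝ) + 1) ^ (j + 1)) ^ 2 * d)) * Fintype.card V) :=
  survivors_tail hc hg hd hd1 hp hp1 (fun k => Set.indicator_nonneg (fun _ _ => zero_le_one) k)
    (fun k => Set.indicator_le_self' (fun _ _ => zero_le_one) k) hj hη hη1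

lemma one_sub_le_percProb [Nonempty V] (hb : 0 < b) (hG : IsRegularExpander G b d) (hd1 : 1 ≤ d)
    (hg : CyclesGE G g) (hp₁ : 0 ≤ p₁) (hp₁1 : p₁ ≤ 1) (hp₂ : 0 ≤ p₂) (hp₂1 : p₂ ≤ 1)
    (hp : 1 - (1 - p₁) * (1 - p₂) = p) (hη : 0 < η) (hη1 : η ≤ 1) (hε : 8 * η < ε) {L : ℕ}
    (hL0 : 0 < L) (hL : 2 * d < L * (b * η)) (hj : 2 * j + 2 < g)
    (hθ : ((d : ℝ) + 1) ^ (j + 1) < (θ - 4 * η) * Fintype.card V)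
    (hθ₁ : θ - η ≤ survivalMean p₁ d j ((Set.univ : Set ℕ).indicator 1))
    (hθp : survivalMean p d j ((Set.univ : Set ℕ).indicator 1) ≤ θ + η)
    (hα : ∀ k, 1 ≤ k → k ≤ d → |survivalMean p d j (({k} : Set ℕ).indicator 1) - α k| ≤ η) :
    1 - ((d + 2) * (2 * Real.exp (-(η ^ 2 / (4 * (((d : ℝ) + 1) ^ (j + 1)) ^ 2 * d)) *
        Fintype.card V)) +
      Real.exp ((1 / (j + 1 + 1 : ℕ) - p₂ ^ L * (b * η / (2 * L))) * Fintype.card V)) ≤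
    percProb G p fun H => HasDegreeDistribution H d α ε := by
  have hc := hG.1.connected hb
  have hV : (0:ℝ) < Fintype.card V := by exact_mod_cast Fintype.card_pos
  have hp0 : 0 ≤ p := by nlinarith
  have hp1 : p ≤ 1 := by nlinarith
  set E := edgeFinset' G with hE
  set τ := 2 * Real.exp (-(η ^ 2 / (4 * (((d : ℝ) + 1) ^ (j + 1)) ^ 2 * d)) * Fintype.card V)
    with hτ
  set Φ : ℕ → Set ℕ := fun k => if k = 0 then Set.univ else {k} with hΦ
  set ρ : Finset (Sym2 V) → Finset (Sym2 V) → ℝ := fun s t =>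
    if ∃ c, ((bigVerts (SimpleGraph.fromEdgeSet (s : Set (Sym2 V))) (j + 1 + 1)).card : ℝ) -
        2 * (η * Fintype.card V) ≤
      (compVerts (SimpleGraph.fromEdgeSet ((s ∪ t : Finset (Sym2 V)) : Set (Sym2 V))) c).card
    then 0 else 1 with hρ
  set f : Finset (Sym2 V) → ℝ := fun s =>
    if HasDegreeDistribution (SimpleGraph.fromEdgeSet (s : Set (Sym2 V))) d α ε then 0 else 1
    with hf
  have hρ0 : ∀ s t, 0 ≤ ρ s t := fun s t => by simp only [hρ]; split_ifs <;> norm_num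
  have hgood : percProb G p (fun H => HasDegreeDistribution H d α ε) = 1 - bexp p E f := by
    rw [← bexp_const p E 1, ← bexp_sub]
    refine bexp_congr p fun s _ => ?_
    simp only [hf]
    split_ifs <;> norm_num
  have hpoint : ∀ s ⊆ E, ∀ t ⊆ E, f (s ∪ t) ≤
      (∑ k ∈ Finset.range (d + 1), deviates G p d j η (Φ k) (s ∪ t)) +
        (deviates G p₁ d j η Set.univ s + ρ s t) := by
    intro s hs t ht
    have h0 : 0 ≤ ∑ k ∈ Finset.range (d + 1), deviates G p d j η (Φ k) (s ∪ t) :=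
      Finset.sum_nonneg fun k _ => deviates_nonneg _ _ _ _ _ _
    have h1 := deviates_nonneg (G := G) p₁ d j η Set.univ s
    by_cases hgd : HasDegreeDistribution
      (SimpleGraph.fromEdgeSet ((s ∪ t : Finset (Sym2 V)) : Set (Sym2 V))) d α ε
    · simp only [hf, if_pos hgd]
      linarith [hρ0 s t]
    · simp only [hf, if_neg hgd]
      by_contra! hlt
      refine hgd ?_
      have hdev : ∀ k ≤ d, deviates G p d j η (Φ k) (s ∪ t) < 1 := fun k hk => by
        have := Finset.single_le_sum (f := fun k => deviates G p d j η (Φ k) (s ∪ t))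
          (fun k _ => deviates_nonneg _ _ _ _ _ _) (Finset.mem_range.2 (Nat.lt_succ_of_le hk))
        linarith [hρ0 s t]
      have hW := lt_of_deviates_lt_one (hdev 0 (Nat.zero_le _))
      have hU := lt_of_deviates_lt_one (show deviates G p₁ d j η Set.univ s < 1 by
        linarith [hρ0 s t])
      simp only [hΦ, if_true] at hW
      rw [abs_lt] at hW hU
      refine hasDegreeDistribution_of_survivors hc hg (Finset.union_subset hs ht) hG.1.1
        (by omega) hε hθ ?_ ?_ ?_
      · nlinarith
      · intro k hk1 hk
        have hk' := lt_of_deviates_lt_one (hdev k hk)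
        simp only [hΦ, if_neg (show k ≠ 0 by omega)] at hk'
        have h2 := hα k hk1 hk
        rw [abs_lt] at hk'
        rw [abs_le] at h2 ⊢
        constructor <;> nlinarith
      · have hρ1 : ρ s t < 1 := by linarith
        have hex : ∃ c, ((bigVerts (SimpleGraph.fromEdgeSet (s : Set (Sym2 V)))
            (j + 1 + 1)).card : ℝ) - 2 * (η * Fintype.card V) ≤
            (compVerts (SimpleGraph.fromEdgeSet ((s ∪ t : Finset (Sym2 V)) : Set (Sym2 V)))
              c).card := by
          by_contra hno
          simp only [hρ, if_neg hno] at hρ1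
          exact lt_irrefl _ hρ1
        obtain ⟨c, hc'⟩ := hex
        refine ⟨c, le_trans ?_ hc'⟩
        have h3 : (survivors G (j + 1) ((Set.univ : Set ℕ).indicator 1) s) ≤
            (bigVerts (SimpleGraph.fromEdgeSet (s : Set (Sym2 V))) (j + 1 + 1)).card := by
          rw [survivors_indicator_univ]
          exact_mod_cast Finset.card_le_card survivingVerts_subset_bigVerts
        nlinarith
  have hexp : bexp p E f ≤ bexp p E (fun s => ∑ k ∈ Finset.range (d + 1),
      deviates G p d j η (Φ k) s) + (bexp p₁ E (deviates G p₁ d j η Set.univ) +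
        bexp p₁ E fun s => bexp p₂ E (ρ s)) := by
    rw [← hp, ← bexp_bexp_union p₁ p₂ E f, ← bexp_bexp_union p₁ p₂ E (fun s =>
      ∑ k ∈ Finset.range (d + 1), deviates G (1 - (1 - p₁) * (1 - p₂)) d j η (Φ k) s), hp,
      ← bexp_add, ← bexp_add]
    refine bexp_mono hp₁ hp₁1 fun s hs => ?_
    rw [← bexp_const p₂ E (deviates G p₁ d j η Set.univ s), ← bexp_add, ← bexp_add]
    exact bexp_mono hp₂ hp₂1 fun t ht => hpoint s hs t ht
  have h1 : bexp p E (fun s => ∑ k ∈ Finset.range (d + 1), deviates G p d j η (Φ k) s) ≤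
      (d + 1) * τ := by
    rw [bexp_sum]
    refine (Finset.sum_le_sum fun k _ =>
      bexp_deviates_le hc hg hG.2 hd1 hp0 hp1 hj hη hη1 (Φ k)).trans ?_
    simp [hτ]
  have h2 : bexp p₁ E (deviates G p₁ d j η Set.univ) ≤ τ :=
    bexp_deviates_le hc hg hG.2 hd1 hp₁ hp₁1 hj hη hη1 _
  have h3 : bexp p₁ E (fun s => bexp p₂ E (ρ s)) ≤
      Real.exp ((1 / (j + 1 + 1 : ℕ) - p₂ ^ L * (b * η / (2 * L))) * Fintype.card V) := by
    refine (bexp_mono hp₁ hp₁1 fun s _ => ?_).trans (bexp_const p₁ E _).le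
    exact bexp_no_large_comp_le hb hG.1 hp₂ hp₂1 hη hL0 hL (Nat.succ_pos _) s
  rw [hgood]
  linarith

end Assembly

section Girth

variable {G : SimpleGraph V} {R : ℕ}

lemma cyclesGE_of_le_girth (h : R ≤ G.girth) : CyclesGE G R :=
  fun _ _ hc => h.trans (SimpleGraph.girth_le_length hc)

lemma le_card_of_le_girth (hR : 0 < R) (h : R ≤ G.girth) : R ≤ Fintype.card V := by
  have hac : ¬ G.IsAcyclic := fun hac => by
    rw [SimpleGraph.girth_eq_zero.2 hac] at h
    omega
  obtain ⟨v, w, hw, hlen⟩ := SimpleGraph.exists_girth_eq_length.2 hac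
  have h1 := hw.isPath_tail.length_lt
  rw [SimpleGraph.Walk.length_tail] at h1
  omega

end Girth

lemma error_sum_le {d : ℕ} {κ₁ κ₂ x n : ℝ} (hn : 2 * (2 * d + 5) / min κ₁ κ₂ ≤ n)
    (hκ₁ : 0 < κ₁) (hκ₂ : 0 < κ₂) (hx : x ≤ -κ₂) :
    (d + 2) * (2 * Real.exp (-κ₁ * n)) + Real.exp (x * n) ≤
      Real.exp (-(min κ₁ κ₂ / 2) * n) := by
  have hκ := lt_min hκ₁ hκ₂
  have hle₁ := min_le_left κ₁ κ₂
  have hle₂ := min_le_right κ₁ κ₂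
  set κ := min κ₁ κ₂
  rw [div_le_iff₀ hκ] at hn
  have hn0 : 0 ≤ n := by
    by_contra! h
    have : (0:ℝ) ≤ d := Nat.cast_nonneg d
    nlinarith
  have h1 : Real.exp (-κ₁ * n) ≤ Real.exp (-κ * n) := Real.exp_le_exp.2 (by nlinarith)
  have h2 : Real.exp (x * n) ≤ Real.exp (-κ * n) := Real.exp_le_exp.2 (by nlinarith)
  have h3 : (2 * d + 5 : ℝ) ≤ Real.exp (κ / 2 * n) := by
    linarith [Real.add_one_le_exp (κ / 2 * n)]
  have h4 : Real.exp (-(κ / 2) * n) = Real.exp (κ / 2 * n) * Real.exp (-κ * n) := by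
    rw [← Real.exp_add]; congr 1; ring
  have h5 := Real.exp_pos (-κ * n)
  rw [h4]
  have h6 := mul_le_mul_of_nonneg_right h3 h5.le
  have h7 : ((d:ℝ) + 2) * (2 * Real.exp (-κ₁ * n)) ≤ (d + 2) * (2 * Real.exp (-κ * n)) := by
    gcongr
  linarith

open Filter Topology in
/-- At large depth, the tree statistics are close to their limits. -/
lemma exists_survivalMean_close {d : ℕ} (hd : 3 ≤ d) {p q : ℝ} (hp : 0 < p) (hp1 : p < 1)
    (hq0 : 0 ≤ q) (hq1 : q < 1) (hq : offspring p d q = q) {η κ : ℝ} (hη : 0 < η) (hκ : 0 < κ) :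
    ∃ j : ℕ, survivalMean p d j ((Set.univ : Set ℕ).indicator 1) ≤
        1 - (1 - p + p * q) ^ d + η ∧
      (∀ k, 1 ≤ k → k ≤ d → |survivalMean p d j (({k} : Set ℕ).indicator 1) -
        d.choose k * p ^ k * (1 - p) ^ (d - k) * (1 - q ^ k)| ≤ η) ∧
      1 / ((j + 1 + 1 : ℕ) : ℝ) ≤ κ := by
  have hlim := tendsto_offspring_iterate hd hp hp1.le hq0 hq1 hq
  have h1 : ∀ᶠ j in atTop, survivalMean p d j ((Set.univ : Set ℕ).indicator 1) ≤
      1 - (1 - p + p * q) ^ d + η := by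
    have hc : Tendsto (fun r : ℝ => 1 - (1 - p + p * r) ^ d) (𝓝 q)
        (𝓝 (1 - (1 - p + p * q) ^ d)) := Continuous.tendsto (by fun_prop) q
    filter_upwards [(hc.comp hlim).eventually (gt_mem_nhds (lt_add_of_pos_right _ hη))] with j hj
    rw [survivalMean_one]
    exact hj.le
  have h2 : ∀ᶠ j in atTop, ∀ k ∈ Finset.range (d + 1),
      |survivalMean p d j (({k} : Set ℕ).indicator 1) -
        d.choose k * p ^ k * (1 - p) ^ (d - k) * (1 - q ^ k)| ≤ η := by
    rw [Filter.eventually_all_finset]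
    intro k hk
    have hc : Tendsto (fun r : ℝ => d.choose k * p ^ k * (1 - p) ^ (d - k) * (1 - r ^ k)) (𝓝 q)
        (𝓝 (d.choose k * p ^ k * (1 - p) ^ (d - k) * (1 - q ^ k))) :=
      Continuous.tendsto (by fun_prop) q
    filter_upwards [(hc.comp hlim).eventually (Metric.closedBall_mem_nhds _ hη)] with j hj
    rw [survivalMean_indicator p d j (Nat.lt_succ_iff.1 (Finset.mem_range.1 hk))]
    exact hj
  have h3 : ∀ᶠ j : ℕ in atTop, 1 / ((j + 1 + 1 : ℕ) : ℝ) ≤ κ := by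
    have := (tendsto_add_atTop_iff_nat 1).2 (tendsto_one_div_add_atTop_nhds_zero_nat (𝕜 := ℝ))
    filter_upwards [this.eventually (gt_mem_nhds hκ)] with j hj
    push_cast at hj ⊢
    exact hj.le
  obtain ⟨j, hj1, hj2, hj3⟩ := (h1.and (h2.and h3)).exists
  exact ⟨j, hj1, fun k _ hk => hj2 k (Finset.mem_range.2 (Nat.lt_succ_of_le hk)), hj3⟩

theorem giant_degree_distribution (d : ℕ) (hd : 3 ≤ d) (p q : ℝ)
    (hp : 1 / ((d : ℝ) - 1) < p) (hp1 : p < 1)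
    (hq0 : 0 ≤ q) (hq1 : q < 1)
    (hq : q = (1 - p + p * q) ^ (d - 1))
    (ε b : ℝ) (hε : 0 < ε) (hb : 0 < b) :
    ∃ c > (0:ℝ), ∃ R : ℕ, 0 < R ∧
      ∀ (V : Type) [Fintype V] [DecidableEq V] (G : SimpleGraph V),
        IsRegularExpander G b d → (R : ℕ∞) ≤ G.girth →
        1 - Real.exp (-c * Fintype.card V) ≤
          percProb G p (fun H =>
            ∀ c₁ : H.ConnectedComponent, IsLargestComp H c₁ →
              ∀ k : ℕ, 1 ≤ k → k ≤ d →
                |(((compVerts H c₁).filter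
                      (fun v => (H.neighborSet v).ncard = k)).card : ℝ) / Fintype.card V
                  - (d.choose k : ℝ) * p ^ k * (1 - p) ^ (d - k) * (1 - q ^ k)| < ε) := by
  have hd' : (3:ℝ) ≤ d := by exact_mod_cast hd
  have hp0 : 0 < p := lt_trans (one_div_pos.2 (by linarith)) hp
  have hqf : offspring p d q = q := hq.symm
  set θ := 1 - (1 - p + p * q) ^ d with hθ
  have hθ0 : 0 < θ := sub_pos.2 (pow_lt_one₀ (by nlinarith) (by nlinarith) (by omega))
  obtain ⟨η, hη, hη1, hηε, hηθ⟩ : ∃ η : ℝ, 0 < η ∧ η ≤ 1 ∧ 8 * η < ε ∧ 4 * η < θ := by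
    refine ⟨min 1 (min (ε / 9) (θ / 5)), by positivity, min_le_left _ _, ?_, ?_⟩
    · have := (min_le_right 1 (min (ε / 9) (θ / 5))).trans (min_le_left _ _)
      linarith
    · have := (min_le_right 1 (min (ε / 9) (θ / 5))).trans (min_le_right _ _)
      linarith
  obtain ⟨p₁, hp₁, hp₁p, hθ₁⟩ := exists_survivalMean_ge hd hp0 hp1 hq0 hq1 hqf hη
  have hp₁1 : 0 < 1 - p₁ := by linarith
  obtain ⟨p₂, hp₂, hp₂1, hp₁₂⟩ : ∃ p₂, 0 < p₂ ∧ p₂ ≤ 1 ∧ 1 - (1 - p₁) * (1 - p₂) = p :=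
    ⟨(p - p₁) / (1 - p₁), div_pos (by linarith) hp₁1, (div_le_one hp₁1).2 (by linarith), by
      field_simp; ring⟩
  obtain ⟨L, hL⟩ := exists_nat_gt (2 * d / (b * η))
  have hL0 : (0:ℝ) < L := lt_trans (by positivity) hL
  rw [div_lt_iff₀ (by positivity)] at hL
  set κ := p₂ ^ L * (b * η / (2 * L)) with hκ
  have hκ0 : 0 < κ := by positivity
  obtain ⟨j, hθj, hαj, hj⟩ := exists_survivalMean_close hd hp0 hp1 hq0 hq1 hqf hη (half_pos hκ0)
  set κ₁ := η ^ 2 / (4 * (((d : ℝ) + 1) ^ (j + 1)) ^ 2 * d) with hκ₁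
  have hκ₁0 : 0 < κ₁ := by positivity
  have hmin : 0 < min κ₁ (κ / 2) := lt_min hκ₁0 (half_pos hκ0)
  obtain ⟨R₁, hR₁⟩ := exists_nat_gt (((d : ℝ) + 1) ^ (j + 1) / (θ - 4 * η))
  obtain ⟨R₂, hR₂⟩ := exists_nat_gt (2 * (2 * d + 5) / min κ₁ (κ / 2))
  refine ⟨min κ₁ (κ / 2) / 2, half_pos hmin, 2 * j + 3 + R₁ + R₂, by omega, ?_⟩
  intro V _ _ G hG hgirth
  have hgirth' : 2 * j + 3 + R₁ + R₂ ≤ G.girth := by exact_mod_cast hgirth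
  have hcard := le_card_of_le_girth (by omega) hgirth'
  have : Nonempty V := Fintype.card_pos_iff.1 (by omega)
  have hcard₁ : (R₁ : ℝ) ≤ Fintype.card V := by exact_mod_cast (by omega)
  have hcard₂ : (R₂ : ℝ) ≤ Fintype.card V := by exact_mod_cast (by omega)
  have hmain := one_sub_le_percProb (θ := θ)
    (α := fun k => d.choose k * p ^ k * (1 - p) ^ (d - k) * (1 - q ^ k))
    hb hG (by omega) (cyclesGE_of_le_girth hgirth') hp₁.le (by linarith)
    hp₂.le hp₂1 hp₁₂ hη hη1 hηε (by exact_mod_cast hL0) hL (j := j) (by omega)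
    (by
      rw [div_lt_iff₀ (by linarith)] at hR₁
      nlinarith) (hθ₁ j) hθj hαj
  have herr := error_sum_le (d := d) (n := Fintype.card V) (x := 1 / (j + 1 + 1 : ℕ) - κ)
    (hR₂.le.trans hcard₂) hκ₁0 (half_pos hκ0) (by linarith)
  exact le_trans (by linarith) hmain

end Percolation

end
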